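/- arXiv:1805.08196 — 2 statements merged into one kernel-verified Lean document; each statement's English description precedes it below -/
import Mathlib

section
/- (Theorem 1: Rademacher-based generalization bound for the CRF loss) Let D be a probability distribution over pairs (x,y) with y ∈ Y(x), where each finite output set satisfies |Y(x)| ≤ r, and let φ(x,y) ∈ ℝ^d be a feature map. Let 𝒲 be the set of w ∈ ℝ^d with at most s nonzero coordinates, and let β(m,w) > 0 be any positive temperature. Define the expected loss L(w,D) = E_{(x,y)∼D}[1 − q(y; x, w)] and, for a sample S = {(x_i,y_i)}_{i=1}^m drawn i.i.d. from D, the empirical CRF loss L(w,S) = (1/m)∑_i (1 − q(y_i; x_i, w)). Then for any δ ∈ (0,1), with probability at least 1 − δ over the choice of S ∼ D^m, simultaneously for all w ∈ 𝒲: L(w,D) ≤ L(w,S) + 2√(s(ln d + 2 ln(mr))/m) + 3√(ln(2/δ)/(2m)). -/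
open Real MeasureTheory Finset

/-- Linear score `⟨φ(x,y), w⟩`. -/
noncomputable def linScore {Y : Type*} {d : ℕ} (φ : Y → Fin d → ℝ)
    (w : Fin d → ℝ) (y : Y) : ℝ :=
  ∑ j, φ y j * w j

/-- Softmax probability of `y` with scores `s`, temperature `β`, over `A`. -/
noncomputable def softmaxProb {Y : Type*} (s : Y → ℝ) (β : ℝ)
    (A : Finset Y) (y : Y) : ℝ :=
  exp (s y / β) / ∑ y' ∈ A, exp (s y' / β)

/-!
The softmax probability of `y₀` is the probability that an exponential clock attached to `y₀` wins a
race against the other outputs, and the loss is thereby an average, over clocks that do not depend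
on the weights, of `0`-`1` losses. Once the sample and the clocks are fixed, the outcome of the
races depends only on the side of finitely many hyperplanes on which the weight vector lies, so by
Sauer–Shelah the `s`-sparse vectors produce only `(d (2m(r-1) + 1))^s` patterns of outcomes on a
sample together with a ghost sample. Symmetrizing the exponential moment of the uniform deviation
moves the expectation over the clocks outside the supremum over the weights by Jensen's inequality,
where Massart's finite-class bound applies; the deviation inequality is then Markov's inequality for
that moment. Working with exponential moments from the start makes a separate concentration step
unnecessary. The supremum is first taken over a countable dense set of weights, and continuity of
the loss extends the bound.
-/

open ProbabilityTheory
open scoped ENNReal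

/- `A` need not be measurable, so `μ A = 1` alone does not give `∀ᵐ ω ∂μ, ω ∈ A`. -/
lemma ae_of_forall_mem_of_measure_eq_one {Ω : Type*} [MeasurableSpace Ω] {μ : Measure Ω}
    [IsProbabilityMeasure μ] {A : Set Ω} (hA : μ A = 1) {p : Ω → Prop}
    (hp : MeasurableSet {ω | p ω}) (h : ∀ ω ∈ A, p ω) : ∀ᵐ ω ∂μ, p ω :=
  (mem_ae_iff_prob_eq_one hp).2 (le_antisymm prob_le_one (hA ▸ measure_mono h))

lemma ofReal_exp_integral_le_lintegral {Ω : Type*} [MeasurableSpace Ω] {ν : Measure Ω}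
    [IsProbabilityMeasure ν] {f : Ω → ℝ} (hf : Integrable f ν) :
    ENNReal.ofReal (exp (∫ ω, f ω ∂ν)) ≤ ∫⁻ ω, ENNReal.ofReal (exp (f ω)) ∂ν := by
  have hmeas : AEStronglyMeasurable (fun ω => exp (f ω)) ν :=
    continuous_exp.comp_aestronglyMeasurable hf.aestronglyMeasurable
  have hpos : 0 ≤ᵐ[ν] fun ω => exp (f ω) := ae_of_all _ fun ω => (exp_pos _).le
  by_cases hexp : Integrable (fun ω => exp (f ω)) ν
  · rw [← ofReal_integral_eq_lintegral_ofReal hexp hpos]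
    exact ENNReal.ofReal_le_ofReal <| convexOn_exp.map_integral_le continuous_exp.continuousOn
      isClosed_univ (ae_of_all _ fun _ => Set.mem_univ _) hf hexp
  · rw [← lintegral_ofReal_ne_top_iff_integrable hmeas hpos, not_not] at hexp
    exact hexp ▸ le_top

section Rademacher

variable {ι κ Ω : Type*} [Fintype κ] [DecidableEq κ]

/-- The exponential Rademacher average `𝔼_σ sup_k exp (c ∑ᵢ σᵢ h k i)` of a family of vectors, over
independent uniform signs `σ`. It takes values in `ℝ≥0∞`, so that the supremum is meaningful for
every family. -/
noncomputable def expRademacher (h : ι → κ → ℝ) (c : ℝ) : ℝ≥0∞ :=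
  (2 ^ Fintype.card κ)⁻¹ *
    ∑ σ : κ → ℤˣ, ⨆ k, ENNReal.ofReal (exp (c * ∑ i, ((σ i : ℤ) : ℝ) * h k i))

lemma sum_exp_signed_sum_eq_prod_cosh (c : ℝ) (b : κ → ℝ) :
    ∑ σ : κ → ℤˣ, exp (c * ∑ i, ((σ i : ℤ) : ℝ) * b i) = ∏ i, (2 * cosh (c * b i)) := by
  have hcosh (x : ℝ) : ∑ ε : ℤˣ, exp (c * (((ε : ℤ) : ℝ) * x)) = 2 * cosh (c * x) := by
    simp [Real.cosh_eq, mul_div_cancel₀]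
  simp_rw [mul_sum, exp_sum, ← hcosh, prod_univ_sum, Fintype.piFinset_univ]

lemma sum_exp_signed_sum_le (c : ℝ) (b : κ → ℝ) :
    ∑ σ : κ → ℤˣ, exp (c * ∑ i, ((σ i : ℤ) : ℝ) * b i)
      ≤ 2 ^ Fintype.card κ * exp (c ^ 2 * (∑ i, b i ^ 2) / 2) := by
  calc ∑ σ : κ → ℤˣ, exp (c * ∑ i, ((σ i : ℤ) : ℝ) * b i)
      = ∏ i, (2 * cosh (c * b i)) := sum_exp_signed_sum_eq_prod_cosh c b
    _ ≤ ∏ i, (2 * exp ((c * b i) ^ 2 / 2)) := by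
        gcongr with i
        exact cosh_le_exp_half_sq _
    _ = 2 ^ Fintype.card κ * exp (c ^ 2 * (∑ i, b i ^ 2) / 2) := by
        rw [prod_mul_distrib, prod_const, card_univ, ← exp_sum, mul_sum, sum_div]
        simp_rw [mul_pow]

lemma expRademacher_le_ncard_mul_exp {h : ι → κ → ℝ} (hfin : (Set.range h).Finite) {R : ℝ}
    (hR : ∀ k, ∑ i, h k i ^ 2 ≤ R) (c : ℝ) :
    expRademacher h c ≤ (Set.range h).ncard * ENNReal.ofReal (exp (c ^ 2 * R / 2)) := by
  set B := hfin.toFinset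
  have hmean (b) (hb : b ∈ B) :
      ∑ σ : κ → ℤˣ, ENNReal.ofReal (exp (c * ∑ i, ((σ i : ℤ) : ℝ) * b i))
        ≤ 2 ^ Fintype.card κ * ENNReal.ofReal (exp (c ^ 2 * R / 2)) := by
    obtain ⟨k, rfl⟩ := hfin.mem_toFinset.1 hb
    rw [← ENNReal.ofReal_sum_of_nonneg fun _ _ => (exp_pos _).le]
    refine (ENNReal.ofReal_le_ofReal ((sum_exp_signed_sum_le c (h k)).trans
      (by gcongr; exact hR k : _ ≤ 2 ^ Fintype.card κ * exp (c ^ 2 * R / 2)))).trans_eq ?_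
    rw [ENNReal.ofReal_mul (by positivity), ENNReal.ofReal_pow (by positivity),
      ENNReal.ofReal_ofNat]
  rw [expRademacher, ENNReal.inv_mul_le_iff (by simp) (by simp)]
  calc ∑ σ : κ → ℤˣ, ⨆ k, ENNReal.ofReal (exp (c * ∑ i, ((σ i : ℤ) : ℝ) * h k i))
      ≤ ∑ σ : κ → ℤˣ, ∑ b ∈ B, ENNReal.ofReal (exp (c * ∑ i, ((σ i : ℤ) : ℝ) * b i)) := by
        refine sum_le_sum fun σ _ => iSup_le fun k => ?_
        exact single_le_sum
          (f := fun b : κ → ℝ => ENNReal.ofReal (exp (c * ∑ i, ((σ i : ℤ) : ℝ) * b i)))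
          (fun _ _ => zero_le) (hfin.mem_toFinset.2 ⟨k, rfl⟩)
    _ = ∑ b ∈ B, ∑ σ : κ → ℤˣ, ENNReal.ofReal (exp (c * ∑ i, ((σ i : ℤ) : ℝ) * b i)) := sum_comm
    _ ≤ ∑ _b ∈ B, 2 ^ Fintype.card κ * ENNReal.ofReal (exp (c ^ 2 * R / 2)) := sum_le_sum hmean
    _ = 2 ^ Fintype.card κ * ((Set.range h).ncard * ENNReal.ofReal (exp (c ^ 2 * R / 2))) := by
        rw [sum_const, nsmul_eq_mul, Set.ncard_eq_toFinset_card _ hfin, mul_left_comm]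

variable [MeasurableSpace Ω]

lemma measurable_expRademacher [Countable ι] {H : Ω → ι → κ → ℝ}
    (hH : ∀ k i, Measurable fun ω => H ω k i) (c : ℝ) :
    Measurable fun ω => expRademacher (H ω) c := by
  unfold expRademacher
  fun_prop

lemma expRademacher_integral_le [Countable ι] {ν : Measure Ω} [IsProbabilityMeasure ν]
    {H : Ω → ι → κ → ℝ} (hH : ∀ k i, Integrable (fun ω => H ω k i) ν) (c : ℝ) :
    expRademacher (fun k i => ∫ ω, H ω k i ∂ν) c ≤ ∫⁻ ω, expRademacher (H ω) c ∂ν := by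
  have hint (σ : κ → ℤˣ) (k : ι) :
      Integrable (fun ω => c * ∑ i, ((σ i : ℤ) : ℝ) * H ω k i) ν :=
    (integrable_finsetSum _ fun i _ => (hH k i).const_mul _).const_mul _
  have hmeas (σ : κ → ℤˣ) : AEMeasurable
      (fun ω => ⨆ k, ENNReal.ofReal (exp (c * ∑ i, ((σ i : ℤ) : ℝ) * H ω k i))) ν :=
    .iSup fun k => (measurable_exp.comp_aemeasurable (hint σ k).aemeasurable).ennreal_ofReal
  simp only [expRademacher]
  rw [lintegral_const_mul' _ _ (by simp), lintegral_finsetSum' _ fun σ _ => hmeas σ]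
  gcongr with σ
  refine iSup_le fun k => ?_
  have hlin : c * ∑ i, ((σ i : ℤ) : ℝ) * ∫ ω, H ω k i ∂ν
      = ∫ ω, c * ∑ i, ((σ i : ℤ) : ℝ) * H ω k i ∂ν := by
    simp_rw [integral_const_mul, integral_finsetSum _ fun i _ => (hH k i).const_mul _,
      integral_const_mul]
  rw [hlin]
  exact (ofReal_exp_integral_le_lintegral (hint σ k)).trans
    (lintegral_mono fun ω => le_iSup
      (fun k => ENNReal.ofReal (exp (c * ∑ i, ((σ i : ℤ) : ℝ) * H ω k i))) k)

end Rademacher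

section Symmetrization

variable {ι κ Z : Type*} [Fintype κ] [MeasurableSpace Z] {D : Measure Z}
  [IsProbabilityMeasure D]

lemma lintegral_pi_prod_swap_sign {F : (κ → Z × Z) → ℝ≥0∞} (hF : Measurable F) (σ : κ → ℤˣ) :
    ∫⁻ T, F (fun i => if σ i = 1 then T i else (T i).swap) ∂(Measure.pi fun _ => D.prod D)
      = ∫⁻ T, F T ∂(Measure.pi fun _ => D.prod D) := by
  have hswap (i : κ) : MeasurePreserving
      (fun z : Z × Z => if σ i = 1 then z else z.swap) (D.prod D) (D.prod D) := by
    split_ifs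
    · exact .id _
    · exact Measure.measurePreserving_swap
  exact (measurePreserving_pi _ _ hswap).lintegral_comp hF

lemma lintegral_expRademacher_sub [DecidableEq κ] [Countable ι] {g : ι → Z → ℝ}
    (hg : ∀ k, Measurable (g k)) (c : ℝ) :
    ∫⁻ T, expRademacher (fun k i => g k (T i).2 - g k (T i).1) c
        ∂(Measure.pi fun _ : κ => D.prod D)
      = ∫⁻ T, ⨆ k, ENNReal.ofReal (exp (c * ∑ i, (g k (T i).2 - g k (T i).1)))
        ∂(Measure.pi fun _ : κ => D.prod D) := by
  set F : (κ → Z × Z) → ℝ≥0∞ := fun T =>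
    ⨆ k, ENNReal.ofReal (exp (c * ∑ i, (g k (T i).2 - g k (T i).1)))
  have hF : Measurable F := by fun_prop
  have hflip (σ : κ → ℤˣ) (T : κ → Z × Z) :
      (⨆ k, ENNReal.ofReal (exp (c * ∑ i, ((σ i : ℤ) : ℝ) * (g k (T i).2 - g k (T i).1))))
        = F fun i => if σ i = 1 then T i else (T i).swap := by
    refine iSup_congr fun k => congrArg (fun x => ENNReal.ofReal (exp (c * x)))
      (sum_congr rfl fun i _ => ?_)
    rcases Int.units_eq_one_or (σ i) with hi | hi <;> simp [hi]
  simp only [expRademacher, hflip]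
  rw [lintegral_const_mul' _ _ (by simp), lintegral_finsetSum' _ fun σ _ => ?_]
  · simp_rw [lintegral_pi_prod_swap_sign hF]
    rw [sum_const, card_univ, Fintype.card_fun, Fintype.card_units_int, nsmul_eq_mul, ← mul_assoc,
      Nat.cast_pow, Nat.cast_ofNat, ENNReal.inv_mul_cancel (by simp) (by simp), one_mul]
  · simp_rw [← hflip]
    fun_prop

lemma ofReal_exp_deviation_le_lintegral_ghost {g : Z → ℝ} (hg : Integrable g D)
    (c : ℝ) (S : κ → Z) :
    ENNReal.ofReal (exp (c * ∑ i, (∫ z, g z ∂D - g (S i))))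
      ≤ ∫⁻ S', ENNReal.ofReal (exp (c * ∑ i, (g (S' i) - g (S i))))
        ∂(Measure.pi fun _ : κ => D) := by
  have heval (i : κ) : MeasurePreserving (Function.eval i) (Measure.pi fun _ : κ => D) D :=
    measurePreserving_eval (fun _ : κ => D) i
  have hint (i : κ) : Integrable (fun S' : κ → Z => g (S' i)) (Measure.pi fun _ : κ => D) :=
    (heval i).integrable_comp_of_integrable hg
  have hsub (i : κ) :
      Integrable (fun S' : κ → Z => g (S' i) - g (S i)) (Measure.pi fun _ : κ => D) :=
    (hint i).sub (integrable_const _)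
  have hmean : c * ∑ i, (∫ z, g z ∂D - g (S i))
      = ∫ S', c * ∑ i, (g (S' i) - g (S i)) ∂(Measure.pi fun _ : κ => D) := by
    rw [integral_const_mul, integral_finsetSum _ fun i _ => hsub i]
    refine congrArg (c * ·) (sum_congr rfl fun i _ => ?_)
    rw [integral_sub (hint i) (integrable_const _), integral_const, probReal_univ, one_smul,
      integral_comp_eval hg.aestronglyMeasurable]
  rw [hmean]
  exact ofReal_exp_integral_le_lintegral
    ((integrable_finsetSum _ fun i _ => hsub i).const_mul c)

theorem lintegral_iSup_exp_deviation_le [DecidableEq κ] [Countable ι] {g : ι → Z → ℝ}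
    (hg : ∀ k, Measurable (g k)) (hgD : ∀ k, Integrable (g k) D) (c : ℝ) :
    ∫⁻ S, ⨆ k, ENNReal.ofReal (exp (c * ∑ i, (∫ z, g k z ∂D - g k (S i))))
        ∂(Measure.pi fun _ : κ => D)
      ≤ ∫⁻ T, expRademacher (fun k i => g k (T i).2 - g k (T i).1) c
        ∂(Measure.pi fun _ : κ => D.prod D) := by
  set P : Measure (κ → Z) := Measure.pi fun _ => D
  set F : (κ → Z) × (κ → Z) → ℝ≥0∞ := fun q =>
    ⨆ k, ENNReal.ofReal (exp (c * ∑ i, (g k (q.2 i) - g k (q.1 i))))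
  have hF : Measurable F := by fun_prop
  calc ∫⁻ S, ⨆ k, ENNReal.ofReal (exp (c * ∑ i, (∫ z, g k z ∂D - g k (S i)))) ∂P
      ≤ ∫⁻ S, ∫⁻ S', F (S, S') ∂P ∂P := by
        refine lintegral_mono fun S => iSup_le fun k => ?_
        refine (ofReal_exp_deviation_le_lintegral_ghost (hgD k) c S).trans ?_
        exact lintegral_mono fun S' => le_iSup
          (fun k => ENNReal.ofReal (exp (c * ∑ i, (g k (S' i) - g k (S i))))) k
    _ = ∫⁻ q, F q ∂(P.prod P) := (lintegral_prod F hF.aemeasurable).symm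
    _ = ∫⁻ T, ⨆ k, ENNReal.ofReal (exp (c * ∑ i, (g k (T i).2 - g k (T i).1)))
          ∂(Measure.pi fun _ : κ => D.prod D) :=
        ((measurePreserving_arrowProdEquivProdArrow Z Z κ (fun _ => D) fun _ => D).lintegral_comp
          hF).symm
    _ = _ := (lintegral_expRademacher_sub hg c).symm

theorem measure_exists_deviation_le [DecidableEq κ] [Countable ι] {g : ι → Z → ℝ}
    (hg : ∀ k, Measurable (g k)) (hgD : ∀ k, Integrable (g k) D) {c : ℝ} (hc : 0 ≤ c) {K : ℝ≥0∞}
    (hK : ∀ᵐ T ∂(Measure.pi fun _ : κ => D.prod D),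
      expRademacher (fun k i => g k (T i).2 - g k (T i).1) c ≤ K) (t : ℝ) :
    (Measure.pi fun _ : κ => D) {S | ∃ k, t < ∑ i, (∫ z, g k z ∂D - g k (S i))}
      ≤ K * ENNReal.ofReal (exp (-(c * t))) := by
  set P : Measure (κ → Z) := Measure.pi fun _ => D
  set G : (κ → Z) → ℝ≥0∞ := fun S =>
    ⨆ k, ENNReal.ofReal (exp (c * ∑ i, (∫ z, g k z ∂D - g k (S i))))
  have hG : Measurable G := by fun_prop
  have hsub : {S : κ → Z | ∃ k, t < ∑ i, (∫ z, g k z ∂D - g k (S i))}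
      ⊆ {S | ENNReal.ofReal (exp (c * t)) ≤ G S} := by
    rintro S ⟨k, hk⟩
    refine le_trans ?_ (le_iSup
      (fun k => ENNReal.ofReal (exp (c * ∑ i, (∫ z, g k z ∂D - g k (S i))))) k)
    gcongr
  calc P {S | ∃ k, t < ∑ i, (∫ z, g k z ∂D - g k (S i))}
      ≤ P {S | ENNReal.ofReal (exp (c * t)) ≤ G S} := measure_mono hsub
    _ ≤ (∫⁻ S, G S ∂P) / ENNReal.ofReal (exp (c * t)) :=
        meas_ge_le_lintegral_div hG.aemeasurable (by simp [exp_pos]) ENNReal.ofReal_ne_top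
    _ ≤ K / ENNReal.ofReal (exp (c * t)) := by
        gcongr
        exact (lintegral_iSup_exp_deviation_le hg hgD c).trans
          ((lintegral_mono_ae hK).trans_eq (by simp))
    _ = K * ENNReal.ofReal (exp (-(c * t))) := by
        rw [exp_neg, ENNReal.ofReal_inv_of_pos (exp_pos _), ENNReal.div_eq_inv_mul, mul_comm]

end Symmetrization

section ExponentialRace

instance : IsProbabilityMeasure (expMeasure 1) := isProbabilityMeasure_expMeasure one_pos

lemma expMeasure_one_Ioi {x : ℝ} (hx : 0 ≤ x) :
    expMeasure 1 (Set.Ioi x) = ENNReal.ofReal (exp (-x)) := by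
  have hIic : (expMeasure 1).real (Set.Iic x) = 1 - exp (-x) := by
    rw [← cdf_eq_real, cdf_expMeasure_eq one_pos, if_pos hx, one_mul]
  rw [← ofReal_measureReal, ← Set.compl_Iic, probReal_compl_eq_one_sub measurableSet_Iic, hIic,
    sub_sub_cancel]

lemma lintegral_expMeasure_one_exp_neg_abs {a : ℝ} (ha : 0 ≤ a) :
    ∫⁻ t, ENNReal.ofReal (exp (-(|t| * a))) ∂(expMeasure 1) = ENNReal.ofReal (1 + a)⁻¹ := by
  have ha' : 0 < 1 + a := by linarith
  have hpdf (b : ℝ) : Measurable (exponentialPDF b) :=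
    (measurable_exponentialPDFReal b).ennreal_ofReal
  have htilt : (exponentialPDF 1 * fun t => ENNReal.ofReal (exp (-(|t| * a))))
      = fun t => ENNReal.ofReal (1 + a)⁻¹ * exponentialPDF (1 + a) t := by
    funext t
    simp only [Pi.mul_apply, exponentialPDF_eq]
    split_ifs with ht
    · rw [← ENNReal.ofReal_mul (by positivity), ← ENNReal.ofReal_mul (by positivity),
        abs_of_nonneg ht, one_mul, ← exp_add, inv_mul_cancel_left₀ ha'.ne']
      ring_nf
    · simp
  calc ∫⁻ t, ENNReal.ofReal (exp (-(|t| * a))) ∂(expMeasure 1)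
      = ∫⁻ t, (exponentialPDF 1 * fun t => ENNReal.ofReal (exp (-(|t| * a)))) t :=
        lintegral_withDensity_eq_lintegral_mul _ (hpdf 1) (by fun_prop)
    _ = ENNReal.ofReal (1 + a)⁻¹ := by
        rw [htilt, lintegral_const_mul _ (hpdf _), lintegral_exponentialPDF_eq_one ha', mul_one]

variable {Y : Type*}

/-- A runner with clock `q.1` wins the race against the competitors `C`, where the competitor `y`
has clock `q.2 y` and score `z y`: dividing each clock by its rate, `|q.1|` comes before
`q.2 y / exp (z y)`. The absolute value matters only on a null set, and makes the event monotone
in the scores for every outcome of the clocks. -/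
def WinsRace (z : Y → ℝ) (C : Finset Y) (q : ℝ × (Y → ℝ)) : Prop :=
  ∀ y ∈ C, |q.1| * exp (z y) < q.2 y

/-- The law of the independent standard exponential clocks in the race `WinsRace`. -/
noncomputable def raceMeasure (Y : Type*) : Measure (ℝ × (Y → ℝ)) :=
  (expMeasure 1).prod (Measure.infinitePi fun _ => expMeasure 1)

instance : IsProbabilityMeasure (raceMeasure Y) := by
  unfold raceMeasure
  infer_instance

lemma measurableSet_winsRace (z : Y → ℝ) (C : Finset Y) :
    MeasurableSet {q | WinsRace z C q} := by
  simp only [WinsRace, Set.ofPred_forall]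
  exact C.measurableSet_biInter fun y _ => measurableSet_lt (by fun_prop) (by fun_prop)

lemma infinitePi_winsRace (z : Y → ℝ) (C : Finset Y) (t : ℝ) :
    Measure.infinitePi (fun _ => expMeasure 1) (Prod.mk t ⁻¹' {q | WinsRace z C q})
      = ENNReal.ofReal (exp (-(|t| * ∑ y ∈ C, exp (z y)))) := by
  have hset : Prod.mk t ⁻¹' {q | WinsRace z C q}
      = Set.pi C fun y => Set.Ioi (|t| * exp (z y)) := rfl
  rw [hset, Measure.infinitePi_pi _ fun _ _ => measurableSet_Ioi,
    prod_congr rfl fun y _ => expMeasure_one_Ioi (by positivity : 0 ≤ |t| * exp (z y)),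
    ← ENNReal.ofReal_prod_of_nonneg fun _ _ => (exp_pos _).le, ← exp_sum, mul_sum,
    sum_neg_distrib]

lemma raceMeasure_real_winsRace (z : Y → ℝ) (C : Finset Y) :
    (raceMeasure Y).real {q | WinsRace z C q} = (1 + ∑ y ∈ C, exp (z y))⁻¹ := by
  rw [Measure.real, raceMeasure, Measure.prod_apply (measurableSet_winsRace z C)]
  simp_rw [infinitePi_winsRace]
  rw [lintegral_expMeasure_one_exp_neg_abs (by positivity), ENNReal.toReal_ofReal (by positivity)]

lemma softmaxProb_eq_raceMeasure_real [DecidableEq Y] (s : Y → ℝ) (b : ℝ) {A : Finset Y} {y₀ : Y}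
    (hy₀ : y₀ ∈ A) :
    softmaxProb s b A y₀
      = (raceMeasure Y).real {q | WinsRace (fun y => (s y - s y₀) / b) (A.erase y₀) q} := by
  rw [raceMeasure_real_winsRace, softmaxProb, ← add_sum_erase A _ hy₀]
  simp_rw [sub_div, exp_sub]
  rw [← sum_div, one_add_div (exp_ne_zero _), inv_div]

end ExponentialRace

section PatternCounting

lemma exists_mem_span_single_of_card_le {R τ : Type*} [Semiring R] [DecidableEq R] [Fintype τ]
    [DecidableEq τ] [Nonempty τ] {s : ℕ} {v : τ → R} (hv : #{j | v j ≠ 0} ≤ s) :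
    ∃ g : Fin s → τ, v ∈ Submodule.span R (Set.range fun i => (Pi.single (g i) 1 : τ → R)) := by
  obtain ⟨e⟩ : Nonempty ({j // v j ≠ 0} ↪ Fin s) :=
    Function.Embedding.nonempty_of_card_le (by rwa [Fintype.card_subtype, Fintype.card_fin])
  let g : Fin s → τ := Function.extend e Subtype.val fun _ => Classical.arbitrary τ
  have hmem : ∑ j, v j • (Pi.single j 1 : τ → R)
      ∈ Submodule.span R (Set.range fun i => (Pi.single (g i) 1 : τ → R)) := by
    refine Submodule.sum_mem _ fun j _ => ?_
    rcases eq_or_ne (v j) 0 with hj | hj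
    · simp [hj]
    · exact Submodule.smul_mem _ _ <| Submodule.subset_span
        ⟨e ⟨j, hj⟩, by simp only [g, e.injective.extend_apply]⟩
  exact ⟨g, by rwa [← pi_eq_sum_univ' v] at hmem⟩

variable {𝕜 E K : Type*} [Field 𝕜] [LinearOrder 𝕜] [IsStrictOrderedRing 𝕜] [AddCommGroup E]
  [Module 𝕜 E]

/- Given a linear dependence `∑ cₖ aₖ = 0`, cutting `T` once by the positive and once by the
negative coefficients gives `u` and `v` for which each nonzero term of `∑ cₖ aₖ (u - v)` is
negative. -/
lemma card_le_finrank_of_shatters [FiniteDimensional 𝕜 E] [DecidableEq K]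
    {a : K → Module.Dual 𝕜 E} {f : K → 𝕜 → Prop} (hf : ∀ k, Antitone (f k))
    {𝒜 : Finset (Finset K)} (h𝒜 : ∀ P ∈ 𝒜, ∃ u : E, ∀ k, k ∈ P ↔ f k (a k u))
    {T : Finset K} (hT : 𝒜.Shatters T) : #T ≤ Module.finrank 𝕜 E := by
  by_contra! hlt
  have hdep : ¬ LinearIndependent 𝕜 fun k : T => a k := fun hli =>
    hlt.not_ge (by simpa [Subspace.dual_finrank_eq] using hli.fintype_card_le_finrank)
  obtain ⟨c, hc, k₀, hk₀⟩ := Fintype.not_linearIndependent_iff.1 hdep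
  have hcut (p : 𝕜 → Prop) : ∃ u : E, ∀ k : T, f k (a k u) ↔ p (c k) := by
    classical
    obtain ⟨P, hP, hPT⟩ := hT (T.filter_subset fun k => ∃ h : k ∈ T, p (c ⟨k, h⟩))
    obtain ⟨u, hu⟩ := h𝒜 P hP
    exact ⟨u, fun k => by simpa [k.2, hu] using Finset.ext_iff.1 hPT k⟩
  obtain ⟨u, hu⟩ := hcut (0 < ·)
  obtain ⟨v, hv⟩ := hcut (· < 0)
  have hterm (k : T) (hk : c k ≠ 0) : c k * (a k u - a k v) < 0 := by
    rcases hk.lt_or_gt with hneg | hpos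
    · refine mul_neg_of_neg_of_pos hneg (sub_pos.2 (lt_of_not_ge fun hle => ?_))
      exact ((hu k).1 (hf k hle ((hv k).2 hneg))).not_gt hneg
    · refine mul_neg_of_pos_of_neg hpos (sub_neg.2 (lt_of_not_ge fun hle => ?_))
      exact ((hv k).1 (hf k hle ((hu k).2 hpos))).not_gt hpos
  have hneg : ∑ k : T, c k * (a k u - a k v) < 0 := by
    refine sum_neg' (fun k _ => ?_) ⟨k₀, mem_univ _, hterm k₀ hk₀⟩
    rcases eq_or_ne (c k) 0 with hk | hk
    · simp [hk]
    · exact (hterm k hk).le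
  have hzero : ∑ k : T, c k * (a k u - a k v) = 0 := by
    simpa using congrArg (fun l : Module.Dual 𝕜 E => l (u - v)) hc
  exact hneg.ne hzero

lemma sum_choose_le_succ_pow (n s : ℕ) : ∑ k ∈ Iic s, n.choose k ≤ (n + 1) ^ s := by
  rw [add_pow, Nat.range_succ_eq_Iic]
  refine sum_le_sum fun k hk => ?_
  rw [one_pow, mul_one]
  exact (n.choose_le_pow k).trans
    (Nat.le_mul_of_pos_right _ (Nat.choose_pos (mem_Iic.1 hk)))

variable [Fintype K]

theorem ncard_range_threshold_patterns_le [FiniteDimensional 𝕜 E] (a : K → Module.Dual 𝕜 E)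
    {f : K → 𝕜 → Prop} (hf : ∀ k, Antitone (f k)) :
    (Set.range fun u : E => {k | f k (a k u)}).ncard
      ≤ (Fintype.card K + 1) ^ Module.finrank 𝕜 E := by
  classical
  set 𝒜 : Finset (Finset K) := {P | ∃ u : E, ∀ k, k ∈ P ↔ f k (a k u)}
  have hsub : (Set.range fun u : E => {k | f k (a k u)})
      ⊆ (fun P : Finset K => (P : Set K)) '' 𝒜 := by
    rintro _ ⟨u, rfl⟩
    exact ⟨({k | f k (a k u)} : Finset K), by simpa [𝒜] using ⟨u, fun _ => Iff.rfl⟩, by simp⟩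
  have hvc : 𝒜.vcDim ≤ Module.finrank 𝕜 E := Finset.sup_le fun T hT =>
    card_le_finrank_of_shatters hf (fun P hP => (mem_filter.1 hP).2) (mem_shatterer.1 hT)
  calc (Set.range fun u : E => {k | f k (a k u)}).ncard
      ≤ #𝒜 := (Set.ncard_le_ncard hsub).trans
        ((Set.ncard_image_le 𝒜.finite_toSet).trans_eq (Set.ncard_coe_finset 𝒜))
    _ ≤ #𝒜.shatterer := card_le_card_shatterer 𝒜
    _ ≤ ∑ k ∈ Iic 𝒜.vcDim, (Fintype.card K).choose k := card_shatterer_le_sum_vcDim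
    _ ≤ ∑ k ∈ Iic (Module.finrank 𝕜 E), (Fintype.card K).choose k :=
        sum_le_sum_of_subset (Iic_subset_Iic.2 hvc)
    _ ≤ _ := sum_choose_le_succ_pow _ _

variable {τ : Type*} [Fintype τ] [Nonempty τ] {s : ℕ}

theorem ncard_sparse_threshold_patterns_le {ι : Type*} {v : ι → τ → 𝕜}
    (hv : ∀ l, #{j | v l j ≠ 0} ≤ s) (a : K → Module.Dual 𝕜 (τ → 𝕜)) {f : K → 𝕜 → Prop}
    (hf : ∀ k, Antitone (f k)) :
    (Set.range fun l => {k | f k (a k (v l))}).ncard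
      ≤ (Fintype.card τ * (Fintype.card K + 1)) ^ s := by
  classical
  let W (g : Fin s → τ) : Submodule 𝕜 (τ → 𝕜) :=
    Submodule.span 𝕜 (Set.range fun i => Pi.single (g i) 1)
  have hW (g : Fin s → τ) : Module.finrank 𝕜 (W g) ≤ s :=
    (finrank_range_le_card _).trans_eq (Fintype.card_fin s)
  have hsub : (Set.range fun l => {k | f k (a k (v l))})
      ⊆ ⋃ g, Set.range fun u : W g => {k | f k ((a k).domRestrict (W g) u)} := by
    rintro _ ⟨l, rfl⟩
    obtain ⟨g, hg⟩ := exists_mem_span_single_of_card_le (hv l)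
    exact Set.mem_iUnion.2 ⟨g, ⟨v l, hg⟩, rfl⟩
  calc (Set.range fun l => {k | f k (a k (v l))}).ncard
      ≤ ∑ g, (Set.range fun u : W g => {k | f k ((a k).domRestrict (W g) u)}).ncard :=
        (Set.ncard_le_ncard hsub).trans (Set.ncard_iUnion_le_of_fintype _)
    _ ≤ ∑ _g : Fin s → τ, (Fintype.card K + 1) ^ s := by
        refine sum_le_sum fun g _ => (ncard_range_threshold_patterns_le _ hf).trans ?_
        exact Nat.pow_le_pow_right (Nat.succ_pos _) (hW g)
    _ = (Fintype.card τ * (Fintype.card K + 1)) ^ s := by simp [mul_pow]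

theorem ncard_sparse_winsRace_patterns_le {ι κ Y : Type*} [Fintype κ]
    {v : ι → τ → ℝ} (hv : ∀ l, #{j | v l j ≠ 0} ≤ s) (a : κ → Y → Module.Dual ℝ (τ → ℝ))
    {C : κ → Finset Y} {n : ℕ} (hC : ∀ i, #(C i) ≤ n) (q : ℝ × (Y → ℝ)) :
    (Set.range fun l => {i | WinsRace (fun y => a i y (v l)) (C i) q}).ncard
      ≤ (Fintype.card τ * (Fintype.card κ * n + 1)) ^ s := by
  let K := Σ i, C i
  let f (p : K) (x : ℝ) : Prop := |q.1| * exp x < q.2 p.2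
  have hf (p : K) : Antitone (f p) := fun x y hxy =>
    (mul_le_mul_of_nonneg_left (exp_le_exp.2 hxy) (abs_nonneg _)).trans_lt
  have hcard : Fintype.card K ≤ Fintype.card κ * n := by
    simpa [K, Fintype.card_sigma] using sum_le_card_nsmul univ (fun i => #(C i)) n fun i _ => hC i
  have hrange : (Set.range fun l => {i | WinsRace (fun y => a i y (v l)) (C i) q})
      = (fun P : Set K => {i | ∀ y : C i, ⟨i, y⟩ ∈ P}) ''
        Set.range fun l => {p : K | f p (a p.1 p.2 (v l))} := by
    simp [← Set.range_comp, Function.comp_def, WinsRace, f]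
  calc _ ≤ (Set.range fun l => {p : K | f p (a p.1 p.2 (v l))}).ncard := by
        rw [hrange]
        exact Set.ncard_image_le
    _ ≤ (Fintype.card τ * (Fintype.card K + 1)) ^ s :=
        ncard_sparse_threshold_patterns_le hv (fun p : K => a p.1 p.2) hf
    _ ≤ (Fintype.card τ * (Fintype.card κ * n + 1)) ^ s := by gcongr

end PatternCounting

section SoftmaxComplexity

variable {ι κ : Type*} [Countable ι] [Fintype κ] [DecidableEq κ]

lemma expRademacher_measureReal_sub_le {Ω : Type*} [MeasurableSpace Ω] {ν : Measure Ω}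
    [IsProbabilityMeasure ν] {E : ι → κ ⊕ κ → Set Ω} (hE : ∀ k j, MeasurableSet (E k j)) {N : ℕ}
    (hN : ∀ ω, (Set.range fun k => {j | ω ∈ E k j}).ncard ≤ N) (c : ℝ) :
    expRademacher (fun k i => ν.real (E k (.inl i)) - ν.real (E k (.inr i))) c
      ≤ N * ENNReal.ofReal (exp (c ^ 2 * Fintype.card κ / 2)) := by
  classical
  let b (P : Set (κ ⊕ κ)) (i : κ) : ℝ := P.indicator 1 (.inl i) - P.indicator 1 (.inr i)
  let H (ω : Ω) (k : ι) : κ → ℝ := b {j | ω ∈ E k j}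
  have hind (k : ι) (j : κ ⊕ κ) : Integrable ((E k j).indicator (1 : Ω → ℝ)) ν :=
    (integrable_const 1).indicator (hE k j)
  have hH (k : ι) (i : κ) :
      (fun ω => H ω k i) = (E k (.inl i)).indicator 1 - (E k (.inr i)).indicator 1 := rfl
  have hmean : (fun k i => ν.real (E k (.inl i)) - ν.real (E k (.inr i)))
      = fun k i => ∫ ω, H ω k i ∂ν := by
    funext k i
    rw [hH, integral_sub' (hind _ _) (hind _ _), integral_indicator_one (hE _ _),
      integral_indicator_one (hE _ _)]
  have hpoint (ω : Ω) : expRademacher (H ω) c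
      ≤ N * ENNReal.ofReal (exp (c ^ 2 * Fintype.card κ / 2)) := by
    have hrange : Set.range (H ω) = b '' Set.range fun k => {j | ω ∈ E k j} :=
      Set.range_comp b _
    have hsq (k : ι) : ∑ i, H ω k i ^ 2 ≤ Fintype.card κ := by
      refine (sum_le_card_nsmul univ _ 1 fun i _ => ?_).trans_eq (by simp)
      simp only [H, b, Set.indicator_apply]
      split_ifs <;> norm_num
    refine (expRademacher_le_ncard_mul_exp (hrange ▸ Set.toFinite _) hsq c).trans ?_
    gcongr
    exact (hrange ▸ Set.ncard_image_le).trans (hN ω)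
  calc expRademacher (fun k i => ν.real (E k (.inl i)) - ν.real (E k (.inr i))) c
      ≤ ∫⁻ ω, expRademacher (H ω) c ∂ν :=
        hmean ▸ expRademacher_integral_le
          (fun k i => hH k i ▸ (hind k (.inl i)).sub (hind k (.inr i))) c
    _ ≤ ∫⁻ _, N * ENNReal.ofReal (exp (c ^ 2 * Fintype.card κ / 2)) ∂ν := lintegral_mono hpoint
    _ = _ := by simp

variable {Y : Type*} {d s r : ℕ}

lemma softmaxProb_linScore_eq_raceMeasure_real [DecidableEq Y] (φ : Y → Fin d → ℝ) (v : Fin d → ℝ)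
    {A : Finset Y} {y₀ : Y} (hy₀ : y₀ ∈ A) :
    softmaxProb (linScore φ v) 1 A y₀ = (raceMeasure Y).real
      {q | WinsRace (fun y => dotProductBilin ℝ ℝ (φ y - φ y₀) v) (A.erase y₀) q} := by
  simp_rw [softmaxProb_eq_raceMeasure_real _ _ hy₀, div_one, map_sub, LinearMap.sub_apply]
  rfl

theorem expRademacher_softmaxProb_sub_le (hd : 0 < d) {v : ι → Fin d → ℝ}
    (hv : ∀ k, #{j | v k j ≠ 0} ≤ s) (φ : κ ⊕ κ → Y → Fin d → ℝ) {A : κ ⊕ κ → Finset Y}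
    (hA : ∀ j, #(A j) ≤ r) {y : κ ⊕ κ → Y} (hy : ∀ j, y j ∈ A j) (c : ℝ) :
    expRademacher (fun k i => softmaxProb (linScore (φ (.inl i)) (v k)) 1 (A (.inl i)) (y (.inl i))
        - softmaxProb (linScore (φ (.inr i)) (v k)) 1 (A (.inr i)) (y (.inr i))) c
      ≤ ((d * (2 * Fintype.card κ * (r - 1) + 1)) ^ s : ℕ)
        * ENNReal.ofReal (exp (c ^ 2 * Fintype.card κ / 2)) := by
  classical
  have : Nonempty (Fin d) := ⟨⟨0, hd⟩⟩
  have hC (j : κ ⊕ κ) : #((A j).erase (y j)) ≤ r - 1 := by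
    rw [card_erase_of_mem (hy j)]
    exact Nat.sub_le_sub_right (hA j) 1
  simp_rw [fun j k => softmaxProb_linScore_eq_raceMeasure_real (φ j) (v k) (hy j)]
  refine expRademacher_measureReal_sub_le
    (E := fun k j => {q | WinsRace (fun y' => dotProductBilin ℝ ℝ (φ j y' - φ j (y j)) (v k))
      ((A j).erase (y j)) q})
    (fun k j => measurableSet_winsRace _ _) (fun q => ?_) c
  simpa [two_mul] using ncard_sparse_winsRace_patterns_le hv
    (fun j y' => dotProductBilin ℝ ℝ (φ j y' - φ j (y j))) hC q

end SoftmaxComplexity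

section CRFLoss

variable {X 𝒴 : Type*} {d : ℕ}

/-- The CRF loss `1 - q(y; x, w)` at temperature `1`, to which every temperature is reduced by
rescaling `w`. -/
noncomputable def crfLoss (φ : X → 𝒴 → Fin d → ℝ) (Ysets : X → Finset 𝒴) (v : Fin d → ℝ)
    (p : X × 𝒴) : ℝ :=
  1 - softmaxProb (linScore (φ p.1) v) 1 (Ysets p.1) p.2

variable {φ : X → 𝒴 → Fin d → ℝ} {Ysets : X → Finset 𝒴}

lemma crfLoss_le_one (v : Fin d → ℝ) (p : X × 𝒴) : crfLoss φ Ysets v p ≤ 1 :=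
  sub_le_self 1 (div_nonneg (exp_pos _).le (sum_nonneg fun _ _ => (exp_pos _).le))

lemma crfLoss_nonneg (v : Fin d → ℝ) {p : X × 𝒴} (hp : p.2 ∈ Ysets p.1) :
    0 ≤ crfLoss φ Ysets v p :=
  sub_nonneg.2 <| div_le_one_of_le₀
    (single_le_sum (f := fun y => exp (linScore (φ p.1) v y / 1)) (fun _ _ => (exp_pos _).le) hp)
    (sum_nonneg fun _ _ => (exp_pos _).le)

lemma continuous_crfLoss {p : X × 𝒴} (hp : (Ysets p.1).Nonempty) :
    Continuous fun v => crfLoss φ Ysets v p := by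
  unfold crfLoss softmaxProb linScore
  exact continuous_const.sub <| Continuous.div (by fun_prop) (by fun_prop)
    fun v => (sum_pos (fun _ _ => exp_pos _) hp).ne'

lemma one_sub_softmaxProb_eq_crfLoss (w : Fin d → ℝ) (b : ℝ) (p : X × 𝒴) :
    1 - softmaxProb (linScore (φ p.1) w) b (Ysets p.1) p.2 = crfLoss φ Ysets (b⁻¹ • w) p := by
  have hscore (y : 𝒴) : linScore (φ p.1) w y / b = linScore (φ p.1) (b⁻¹ • w) y / 1 := by
    simp only [linScore, sum_div, Pi.smul_apply, smul_eq_mul]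
    exact sum_congr rfl fun j _ => by ring
  simp only [crfLoss, softmaxProb, hscore]

variable [MeasurableSpace X] [MeasurableSpace 𝒴] {D : Measure (X × 𝒴)} [IsProbabilityMeasure D]

lemma ae_norm_crfLoss_le_one (hsupp : D {p | p.2 ∈ Ysets p.1} = 1) {v : Fin d → ℝ}
    (hv : Measurable (crfLoss φ Ysets v)) : ∀ᵐ p ∂D, ‖crfLoss φ Ysets v p‖ ≤ 1 :=
  ae_of_forall_mem_of_measure_eq_one hsupp (measurableSet_le hv.norm measurable_const)
    fun p hp => by
      rw [Real.norm_eq_abs, abs_of_nonneg (crfLoss_nonneg v hp)]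
      exact crfLoss_le_one v p

variable {m s r : ℕ}

lemma ae_expRademacher_crfLoss_sub_le {ι : Type*} [Countable ι] (hd : 0 < d)
    (hsupp : D {p | p.2 ∈ Ysets p.1} = 1) (hY : ∀ x, #(Ysets x) ≤ r) {v : ι → Fin d → ℝ}
    (hv : ∀ k, #{j | v k j ≠ 0} ≤ s) (hmeas : ∀ k, Measurable (crfLoss φ Ysets (v k))) (c : ℝ) :
    ∀ᵐ T ∂(Measure.pi fun _ : Fin m => D.prod D),
      expRademacher (fun k i => crfLoss φ Ysets (v k) (T i).2 - crfLoss φ Ysets (v k) (T i).1) c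
        ≤ ((d * (2 * m * (r - 1) + 1)) ^ s : ℕ) * ENNReal.ofReal (exp (c ^ 2 * m / 2)) := by
  set A : Set (X × 𝒴) := {p | p.2 ∈ Ysets p.1}
  have hA : Measure.pi (fun _ : Fin m => D.prod D) (Set.univ.pi fun _ => A ×ˢ A) = 1 := by
    simp [Measure.pi_pi, Measure.prod_prod, hsupp]
  refine ae_of_forall_mem_of_measure_eq_one hA (measurableSet_le ?_ measurable_const) fun T hT => ?_
  · exact measurable_expRademacher (fun k i => by fun_prop) c
  let p (j : Fin m ⊕ Fin m) : X × 𝒴 := j.elim (fun i => (T i).1) fun i => (T i).2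
  have hp (j : Fin m ⊕ Fin m) : (p j).2 ∈ Ysets (p j).1 := by
    rcases j with i | i
    · exact (hT i trivial).1
    · exact (hT i trivial).2
  simpa [crfLoss, p] using expRademacher_softmaxProb_sub_le hd hv (fun j => φ (p j).1)
    (fun j => hY (p j).1) hp c

theorem measure_exists_crfLoss_deviation_le {ι : Type*} [Countable ι] (hd : 0 < d)
    (hsupp : D {p | p.2 ∈ Ysets p.1} = 1) (hY : ∀ x, #(Ysets x) ≤ r) {v : ι → Fin d → ℝ}
    (hv : ∀ k, #{j | v k j ≠ 0} ≤ s) (hmeas : ∀ k, Measurable (crfLoss φ Ysets (v k)))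
    {ε : ℝ} (hε : 0 ≤ ε) :
    (Measure.pi fun _ : Fin m => D)
        {S | ∃ k, m * ε < ∑ i, (∫ p, crfLoss φ Ysets (v k) p ∂D - crfLoss φ Ysets (v k) (S i))}
      ≤ ((d * (2 * m * (r - 1) + 1)) ^ s : ℕ) * ENNReal.ofReal (exp (-(m * ε ^ 2 / 2))) := by
  have hint (k : ι) : Integrable (crfLoss φ Ysets (v k)) D :=
    .of_bound (hmeas k).aestronglyMeasurable 1 (ae_norm_crfLoss_le_one hsupp (hmeas k))
  refine (measure_exists_deviation_le hmeas hint hε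
    (ae_expRademacher_crfLoss_sub_le hd hsupp hY hv hmeas ε) (m * ε)).trans_eq ?_
  rw [mul_assoc, ← ENNReal.ofReal_mul (exp_pos _).le, ← exp_add]
  ring_nf

lemma integral_crfLoss_le_of_mem_closure (hsupp : D {p | p.2 ∈ Ysets p.1} = 1)
    (hYne : ∀ x, (Ysets x).Nonempty) {V t : Set (Fin d → ℝ)} (htV : t ⊆ V) (hVt : V ⊆ closure t)
    (hmeas : ∀ v ∈ V, Measurable (crfLoss φ Ysets v)) {S : Fin m → X × 𝒴} {ε : ℝ}
    (ht : ∀ v ∈ t, ∫ p, crfLoss φ Ysets v p ∂D ≤ 1 / m * ∑ i, crfLoss φ Ysets v (S i) + ε) :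
    ∀ v ∈ V, ∫ p, crfLoss φ Ysets v p ∂D ≤ 1 / m * ∑ i, crfLoss φ Ysets v (S i) + ε := by
  intro v hv
  have hrisk : ContinuousOn (fun v => ∫ p, crfLoss φ Ysets v p ∂D) V :=
    continuousOn_of_dominated (fun v hv => (hmeas v hv).aestronglyMeasurable)
      (fun v hv => ae_norm_crfLoss_le_one hsupp (hmeas v hv)) (integrable_const 1)
      (ae_of_all _ fun p => (continuous_crfLoss (hYne p.1)).continuousOn)
  have hemp : Continuous fun v => 1 / m * ∑ i, crfLoss φ Ysets v (S i) + ε :=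
    (continuous_const.mul
      (continuous_finsetSum _ fun i _ => continuous_crfLoss (hYne (S i).1))).add_const ε
  exact ContinuousWithinAt.closure_le (hVt hv) ((hrisk v hv).mono htV) hemp.continuousWithinAt ht

theorem measure_compl_integral_crfLoss_le (hm : 0 < m) (hd : 0 < d)
    (hsupp : D {p | p.2 ∈ Ysets p.1} = 1) (hYne : ∀ x, (Ysets x).Nonempty)
    (hY : ∀ x, #(Ysets x) ≤ r) {V : Set (Fin d → ℝ)} (hV : ∀ v ∈ V, #{j | v j ≠ 0} ≤ s)
    (hmeas : ∀ v ∈ V, Measurable (crfLoss φ Ysets v)) {ε : ℝ} (hε : 0 ≤ ε) :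
    (Measure.pi fun _ : Fin m => D) {S | ∀ v ∈ V,
        ∫ p, crfLoss φ Ysets v p ∂D ≤ 1 / m * ∑ i, crfLoss φ Ysets v (S i) + ε}ᶜ
      ≤ ((d * (2 * m * (r - 1) + 1)) ^ s : ℕ) * ENNReal.ofReal (exp (-(m * ε ^ 2 / 2))) := by
  have hm0 : (0 : ℝ) < m := Nat.cast_pos.2 hm
  obtain ⟨t, htV, htc, hVt⟩ :=
    (TopologicalSpace.IsSeparable.of_separableSpace V).exists_countable_dense_subset
  have := htc.to_subtype
  refine (measure_mono (Set.compl_subset_comm.1 fun S hS => ?_)).trans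
    (measure_exists_crfLoss_deviation_le hd hsupp hY (fun v : t => hV v (htV v.2))
      (fun v => hmeas v (htV v.2)) hε)
  refine integral_crfLoss_le_of_mem_closure hsupp hYne htV hVt hmeas fun v hv => ?_
  have hdev : ∑ i, (∫ p, crfLoss φ Ysets v p ∂D - crfLoss φ Ysets v (S i)) ≤ m * ε :=
    not_lt.1 fun h => hS ⟨⟨v, hv⟩, h⟩
  rw [sum_sub_distrib, sum_const, card_univ, Fintype.card_fin, nsmul_eq_mul] at hdev
  rw [one_div, inv_mul_eq_div, div_add' _ _ _ hm0.ne', le_div_iff₀ hm0]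
  linarith

end CRFLoss

section SampleSize

lemma add_le_half_mul_sq {m a l ε : ℝ} (hm : 0 < m) (ha : 0 ≤ a) (hl : 0 ≤ l)
    (hε : ε = 2 * √(a / m) + 3 * √(l / (2 * m))) : a + l ≤ m * ε ^ 2 / 2 := by
  have hsq : 4 * (a / m) + 9 * (l / (2 * m)) ≤ ε ^ 2 := by
    have hcross : 0 ≤ √(a / m) * √(l / (2 * m)) := by positivity
    rw [hε]
    nlinarith [sq_sqrt (show 0 ≤ a / m by positivity),
      sq_sqrt (show 0 ≤ l / (2 * m) by positivity)]
  calc a + l ≤ m * (4 * (a / m) + 9 * (l / (2 * m))) / 2 := by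
        field_simp
        linarith
    _ ≤ m * ε ^ 2 / 2 := by gcongr

lemma pattern_count_le_exp {m d r : ℕ} (hm : 0 < m) (hd : 0 < d) (hr : 0 < r) (s : ℕ) :
    (((d * (2 * m * (r - 1) + 1)) ^ s : ℕ) : ℝ) ≤ exp (s * (log d + 2 * log (m * r))) := by
  have hcount : 2 * m * (r - 1) + 1 ≤ (m * r) ^ 2 := by
    obtain ⟨r, rfl⟩ := Nat.exists_eq_succ_of_ne_zero hr.ne'
    simp only [Nat.succ_eq_add_one, Nat.add_sub_cancel]
    nlinarith [sq_nonneg (m * r), mul_pos hm hm]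
  have hexp : exp (s * (log d + 2 * log (m * r))) = ((d * (m * r) ^ 2 : ℕ) : ℝ) ^ s := by
    have hmr : (0 : ℝ) < m * r := by positivity
    rw [exp_nat_mul, exp_add, exp_log (by positivity), ← Nat.cast_ofNat, exp_nat_mul, exp_log hmr]
    push_cast
    rfl
  rw [hexp]
  exact_mod_cast Nat.pow_le_pow_left (Nat.mul_le_mul_left d hcount) s

lemma pattern_count_mul_exp_neg_le {m d r : ℕ} (hm : 0 < m) (hd : 0 < d) (hr : 0 < r) (s : ℕ)
    {δ ε : ℝ} (hδ0 : 0 < δ) (hδ1 : δ < 1)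
    (hε : ε = 2 * √(s * (log d + 2 * log (m * r)) / m) + 3 * √(log (2 / δ) / (2 * m))) :
    ((d * (2 * m * (r - 1) + 1)) ^ s : ℕ) * ENNReal.ofReal (exp (-(m * ε ^ 2 / 2)))
      ≤ ENNReal.ofReal δ := by
  set a : ℝ := s * (log d + 2 * log (m * r))
  have ha : 0 ≤ a := by
    have hlog : 0 ≤ log ((m : ℝ) * r) := by exact_mod_cast log_natCast_nonneg (m * r)
    have := log_natCast_nonneg d
    positivity
  have hl : 0 ≤ log (2 / δ) := log_nonneg (by rw [le_div_iff₀ hδ0]; linarith)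
  have hexponent := add_le_half_mul_sq (Nat.cast_pos.2 hm) ha hl hε
  rw [← ENNReal.ofReal_natCast, ← ENNReal.ofReal_mul (Nat.cast_nonneg _)]
  refine ENNReal.ofReal_le_ofReal ?_
  calc _ ≤ exp a * exp (-(a + log (2 / δ))) := by
        gcongr
        exact pattern_count_le_exp hm hd hr s
    _ = δ / 2 := by
        rw [← exp_add, neg_add, add_neg_cancel_left, exp_neg, exp_log (by positivity), inv_div]
    _ ≤ δ := by linarith

end SampleSize

theorem crf_generalization_bound_general {X 𝒴 : Type*} [MeasurableSpace X] [MeasurableSpace 𝒴]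
    {m d s r : ℕ} (hm : 0 < m) (hd : 0 < d) (hr : 0 < r) {Ysets : X → Finset 𝒴}
    (hYne : ∀ x, (Ysets x).Nonempty) (hYcard : ∀ x, #(Ysets x) ≤ r) {φ : X → 𝒴 → Fin d → ℝ}
    {D : Measure (X × 𝒴)} [IsProbabilityMeasure D] (hsupp : D {p | p.2 ∈ Ysets p.1} = 1)
    {V : Set (Fin d → ℝ)} (hV : ∀ v ∈ V, #{j | v j ≠ 0} ≤ s)
    (hmeas : ∀ v ∈ V, Measurable (crfLoss φ Ysets v)) {δ : ℝ} (hδ0 : 0 < δ) (hδ1 : δ < 1) :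
    ENNReal.ofReal (1 - δ) ≤ (Measure.pi fun _ : Fin m => D) {S | ∀ v ∈ V,
      ∫ p, crfLoss φ Ysets v p ∂D ≤ 1 / m * ∑ i, crfLoss φ Ysets v (S i)
        + (2 * √(s * (log d + 2 * log (m * r)) / m) + 3 * √(log (2 / δ) / (2 * m)))} := by
  have hbad := (measure_compl_integral_crfLoss_le hm hd hsupp hYne hYcard hV hmeas
    (by positivity)).trans (pattern_count_mul_exp_neg_le hm hd hr s hδ0 hδ1 rfl)
  rw [ENNReal.ofReal_sub _ hδ0.le, ENNReal.ofReal_one, tsub_le_iff_right]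
  exact measure_univ.symm.trans_le ((measure_univ_le_add_compl _).trans (by gcongr))

/-- **Theorem 1: Rademacher-based generalization bound for the CRF loss.**
With probability at least `1 − δ` over an i.i.d. sample `S ∼ D^m`,
simultaneously for all `s`-sparse weight vectors `w`,
`L(w,D) ≤ L(w,S) + 2√(s(ln d + 2 ln(mr))/m) + 3√(ln(2/δ)/(2m))`. -/
theorem crf_generalization_bound
    {X : Type*} [MeasurableSpace X]
    {𝒴 : Type*} [Fintype 𝒴] [MeasurableSpace 𝒴]
    (m d s r : ℕ) (hm : 0 < m) (hd : 0 < d) (hr : 0 < r)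
    (Ysets : X → Finset 𝒴) (hYne : ∀ x, (Ysets x).Nonempty)
    (hYcard : ∀ x, (Ysets x).card ≤ r)
    (φ : X → 𝒴 → Fin d → ℝ)
    (β : ℕ → (Fin d → ℝ) → ℝ) (hβ : ∀ k w, 0 < β k w)
    (D : Measure (X × 𝒴)) [IsProbabilityMeasure D]
    (hsupp : D {p : X × 𝒴 | p.2 ∈ Ysets p.1} = 1)
    (hmeas : ∀ w : Fin d → ℝ, Measurable fun p : X × 𝒴 =>
      softmaxProb (linScore (φ p.1) w) (β m w) (Ysets p.1) p.2)
    (δ : ℝ) (hδ0 : 0 < δ) (hδ1 : δ < 1) :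
    (Measure.pi fun _ : Fin m => D)
      {S : Fin m → X × 𝒴 | ∀ w : Fin d → ℝ,
        (Finset.univ.filter fun j => w j ≠ 0).card ≤ s →
        (∫ p, (1 - softmaxProb (linScore (φ p.1) w) (β m w) (Ysets p.1) p.2) ∂D)
          ≤ (1 / (m : ℝ)) * (∑ i, (1 -
              softmaxProb (linScore (φ (S i).1) w) (β m w) (Ysets (S i).1) (S i).2))
            + 2 * Real.sqrt ((s : ℝ) * (Real.log d + 2 * Real.log (m * r)) / m)
            + 3 * Real.sqrt (Real.log (2 / δ) / (2 * m))}
      ≥ ENNReal.ofReal (1 - δ) := by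
  have hloss (w : Fin d → ℝ) : (fun p : X × 𝒴 =>
      1 - softmaxProb (linScore (φ p.1) w) (β m w) (Ysets p.1) p.2)
        = crfLoss φ Ysets ((β m w)⁻¹ • w) :=
    funext (one_sub_softmaxProb_eq_crfLoss w (β m w))
  have hsparse (w : Fin d → ℝ) : #{j | ((β m w)⁻¹ • w) j ≠ 0} ≤ #{j | w j ≠ 0} :=
    card_le_card (monotone_filter_right _ fun j _ => right_ne_zero_of_mul)
  refine (crf_generalization_bound_general hm hd hr hYne hYcard hsupp
    (V := (fun w => (β m w)⁻¹ • w) '' {w | #{j | w j ≠ 0} ≤ s})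
    (Set.forall_mem_image.2 fun w hw => (hsparse w).trans hw)
    (Set.forall_mem_image.2 fun w _ => hloss w ▸ (hmeas w).const_sub 1)
    hδ0 hδ1).trans (measure_mono fun S hS w hw => ?_)
  simpa only [← hloss, add_assoc] using hS _ ⟨w, hw, rfl⟩
end

section
/- (Empirical Rademacher complexity bound inside the proof of Theorem 1) Fix a sample S = {(x_i,y_i)}_{i=1}^m where each output set satisfies |Y(x_i)| ≤ r, and a feature map φ into ℝ^d. Let 𝒲 be the set of w ∈ ℝ^d with at most s nonzero coordinates, let β(m,w) > 0 be any positive temperature, and consider the loss class G = { (x,y) ↦ 1 − q(y; x, w) : w ∈ 𝒲 }. Then the empirical Rademacher complexity R̂_S(G) = E_σ[ sup_{w∈𝒲} (1/m) ∑_{i=1}^m σ_i (1 − q(y_i; x_i, w)) ], where σ₁,…,σ_m are i.i.d. uniform ±1 random variables, satisfies R̂_S(G) ≤ √( s(ln d + 2 ln(mr)) / m ). -/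
open Real Finset

/-! Choosing `y` among the outputs with scores `z` is a race with Gumbel noise: conditionally on an
auxiliary uniform variable `u`, each competitor `y'` independently loses against `y` with
probability `u ^ exp (z y' - z y)`, and integrating the product over `u` gives
`(1 + ∑ exp (z y' - z y))⁻¹`, the softmax probability. Hence the softmax class is a mixture of
classes of indicators "all competitors lose", in each of which a competitor loses when the linear
score difference lies below a fixed threshold. A mixture has at most the Rademacher complexity of
its worst component, so no covering argument is needed. For one component, a sparse support leaves
thresholds of linear forms in `s` variables, a family of VC dimension at most `s`; Sauer–Shelah
counts its patterns and Massart's lemma turns the count into a bound. Scaling by the inverse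
temperature preserves sparsity, so the temperature may be any function of the weights. -/

open MeasureTheory Module
open scoped BigOperators

section Expect

variable {α : Type*} [Fintype α]

theorem exp_expect_le_expect_exp [Nonempty α] (f : α → ℝ) :
    exp (𝔼 a, f a) ≤ 𝔼 a, exp (f a) := by
  have hjensen := convexOn_exp.map_sum_le (t := univ) (w := fun _ : α ↦ (Fintype.card α : ℝ)⁻¹)
    (p := f) (fun _ _ ↦ by positivity) (by simp) fun _ _ ↦ Set.mem_univ _
  simpa only [Fintype.expect_eq_sum_div_card, smul_eq_mul, ← mul_sum, inv_mul_eq_div,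
    ← sum_div] using hjensen

variable {Ω : Type*} [MeasurableSpace Ω] {μ : Measure Ω} {f : α → Ω → ℝ}

theorem integrable_expect (hf : ∀ a, Integrable (f a) μ) :
    Integrable (fun ω ↦ 𝔼 a, f a ω) μ := by
  simp only [Fintype.expect_eq_sum_div_card]
  exact (integrable_finsetSum _ fun a _ ↦ hf a).div_const _

theorem integral_expect (hf : ∀ a, Integrable (f a) μ) :
    ∫ ω, 𝔼 a, f a ω ∂μ = 𝔼 a, ∫ ω, f a ω ∂μ := by
  simp only [Fintype.expect_eq_sum_div_card]
  rw [integral_div, integral_finsetSum _ fun a _ ↦ hf a]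

end Expect

section Rademacher

/-- The Rademacher sign encoded by a Boolean. -/
noncomputable def rademacherSign (b : Bool) : ℝ := if b then 1 else -1

@[simp] theorem rademacherSign_not (b : Bool) : rademacherSign (!b) = -rademacherSign b := by
  cases b <;> simp [rademacherSign]

@[simp] theorem abs_rademacherSign (b : Bool) : |rademacherSign b| = 1 := by
  cases b <;> simp [rademacherSign]

variable {ι W : Type*} [Fintype ι]

/-- The average of `x` weighted by the signs `σ`. -/
noncomputable def rademacherAverage (σ : ι → Bool) (x : ι → ℝ) : ℝ :=
  𝔼 i, rademacherSign (σ i) * x i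

theorem rademacherAverage_sub (σ : ι → Bool) (x y : ι → ℝ) :
    rademacherAverage σ (fun i ↦ x i - y i) = rademacherAverage σ x - rademacherAverage σ y := by
  simp only [rademacherAverage, mul_sub, expect_sub_distrib]

theorem rademacherAverage_not (σ : ι → Bool) (x : ι → ℝ) :
    rademacherAverage (fun i ↦ !σ i) x = -rademacherAverage σ x := by
  simp only [rademacherAverage, rademacherSign_not, neg_mul, expect_neg_distrib]

theorem bddAbove_range_rademacherAverage {f : W → ι → ℝ} {c : ℝ} (hf : ∀ w i, |f w i| ≤ c)
    (σ : ι → Bool) : BddAbove (Set.range fun w ↦ rademacherAverage σ (f w)) :=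
  ⟨𝔼 _i : ι, c, Set.forall_mem_range.2 fun w ↦ expect_le_expect fun i _ ↦
    (le_abs_self _).trans (by simpa [abs_mul] using hf w i)⟩

theorem integrable_rademacherAverage {Ω : Type*} [MeasurableSpace Ω] {μ : Measure Ω}
    {q : Ω → ι → ℝ} (hq : ∀ i, Integrable (fun ω ↦ q ω i) μ) (σ : ι → Bool) :
    Integrable (fun ω ↦ rademacherAverage σ (q ω)) μ :=
  integrable_expect fun i ↦ (hq i).const_mul _

theorem integral_rademacherAverage {Ω : Type*} [MeasurableSpace Ω] {μ : Measure Ω}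
    {q : Ω → ι → ℝ} (hq : ∀ i, Integrable (fun ω ↦ q ω i) μ) (σ : ι → Bool) :
    ∫ ω, rademacherAverage σ (q ω) ∂μ = rademacherAverage σ fun i ↦ ∫ ω, q ω i ∂μ := by
  simp only [rademacherAverage, integral_expect fun i ↦ (hq i).const_mul _, integral_const_mul]

variable [DecidableEq ι]

theorem expect_comp_not (F : (ι → Bool) → ℝ) : 𝔼 σ : ι → Bool, F (fun i ↦ !σ i) = 𝔼 σ, F σ :=
  Fintype.expect_equiv (Equiv.piCongrRight fun _ ↦ Equiv.boolNot) _ _ fun _ ↦ rfl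

theorem expect_rademacherAverage (x : ι → ℝ) : 𝔼 σ, rademacherAverage σ x = 0 := by
  have hflip := expect_comp_not fun σ ↦ rademacherAverage σ x
  simp only [rademacherAverage_not, expect_neg_distrib] at hflip
  linarith

theorem expect_exp_sum_rademacherSign (x : ι → ℝ) :
    𝔼 σ : ι → Bool, exp (∑ i, rademacherSign (σ i) * x i) = ∏ i, cosh (x i) := by
  have hprod : ∑ σ : ι → Bool, exp (∑ i, rademacherSign (σ i) * x i) = ∏ i, (2 * cosh (x i)) := by
    simp_rw [exp_sum, ← Fintype.prod_sum fun i b ↦ exp (rademacherSign b * x i)]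
    refine prod_congr rfl fun i _ ↦ ?_
    simp [rademacherSign, cosh_eq, mul_div_cancel₀]
  rw [Fintype.expect_eq_sum_div_card, hprod, prod_mul_distrib]
  simp

theorem expect_exp_rademacherAverage_le [Nonempty ι] {x : ι → ℝ} {c : ℝ} (hx : ∀ i, |x i| ≤ c)
    (t : ℝ) :
    𝔼 σ, exp (t * rademacherAverage σ x) ≤ exp (c ^ 2 / (2 * Fintype.card ι) * t ^ 2) := by
  have hmean (σ : ι → Bool) : t * rademacherAverage σ x =
      ∑ i, rademacherSign (σ i) * (t / Fintype.card ι * x i) := by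
    rw [rademacherAverage, Fintype.expect_eq_sum_div_card, mul_div_left_comm, sum_mul]
    exact sum_congr rfl fun _ _ ↦ by ring
  simp_rw [hmean, expect_exp_sum_rademacherSign]
  calc ∏ i, cosh (t / Fintype.card ι * x i)
      ≤ ∏ _i : ι, exp ((t / Fintype.card ι) ^ 2 * c ^ 2 / 2) := by
        refine prod_le_prod (fun i _ ↦ (cosh_pos _).le) fun i _ ↦ ?_
        refine (cosh_le_exp_half_sq _).trans (exp_le_exp.2 ?_)
        rw [mul_pow, ← sq_abs (x i)]
        gcongr
        exact hx i
    _ = exp (c ^ 2 / (2 * Fintype.card ι) * t ^ 2) := by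
        rw [prod_const, card_univ, ← exp_nat_mul]
        congr 1
        field_simp

/-- The empirical Rademacher complexity of the class `f`, indexed by `W`, on a sample indexed by
`ι`: the member `w` enters through its values `f w i` at the sample points. Signs are Booleans, so
the expectation over them is an average over `ι → Bool`. The supremum has the junk value `0` where
the class is unbounded. -/
noncomputable def rademacherComplexity (f : W → ι → ℝ) : ℝ :=
  𝔼 σ, ⨆ w, rademacherAverage σ (f w)

theorem rademacherComplexity_subtype (p : W → Prop) (f : W → ι → ℝ) :
    rademacherComplexity (fun w : {w // p w} ↦ f w) =
      1 / 2 ^ Fintype.card ι * ∑ σ : ι → Bool, sSup {v : ℝ | ∃ w, p w ∧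
        v = 1 / (Fintype.card ι : ℝ) * ∑ i, (if σ i then (1 : ℝ) else -1) * f w i} := by
  have hrange (σ : ι → Bool) : Set.range (fun w : {w // p w} ↦ rademacherAverage σ (f w)) =
      {v : ℝ | ∃ w, p w ∧
        v = 1 / (Fintype.card ι : ℝ) * ∑ i, (if σ i then (1 : ℝ) else -1) * f w i} := by
    ext v
    simp only [Set.mem_range, Set.mem_ofPred_eq, Subtype.exists, exists_prop, eq_comm (b := v),
      rademacherAverage, rademacherSign, Fintype.expect_eq_sum_div_card, one_div_mul_eq_div]
  simp only [rademacherComplexity, iSup, hrange, Fintype.expect_eq_sum_div_card]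
  simp [div_eq_inv_mul]

variable {f : W → ι → ℝ} {c : ℝ}

theorem expect_rademacherAverage_le_rademacherComplexity (hf : ∀ w i, |f w i| ≤ c)
    (w : (ι → Bool) → W) : 𝔼 σ, rademacherAverage σ (f (w σ)) ≤ rademacherComplexity f :=
  expect_le_expect fun σ _ ↦ le_ciSup (bddAbove_range_rademacherAverage hf σ) (w σ)

/-- Selections `w` of near-maximizers replace the suprema, and unlike these they are compatible with
integrating the class over a parameter, without any measurability question. -/
theorem rademacherComplexity_le_of_forall_selection [Nonempty W] {C : ℝ}
    (h : ∀ w : (ι → Bool) → W, 𝔼 σ, rademacherAverage σ (f (w σ)) ≤ C) :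
    rademacherComplexity f ≤ C := by
  refine le_of_forall_pos_le_add fun ε hε ↦ ?_
  choose w hw using fun σ : ι → Bool ↦
    exists_lt_of_lt_ciSup (sub_lt_self (⨆ w, rademacherAverage σ (f w)) hε)
  calc rademacherComplexity f ≤ 𝔼 σ, (rademacherAverage σ (f (w σ)) + ε) :=
        expect_le_expect fun σ _ ↦ (sub_lt_iff_lt_add.1 (hw σ)).le
    _ = 𝔼 σ, rademacherAverage σ (f (w σ)) + ε := by
        rw [expect_add_distrib, Fintype.expect_const]
    _ ≤ C + ε := by grw [h w]

theorem rademacherComplexity_comp_le {V : Type*} [Nonempty V] (hf : ∀ w i, |f w i| ≤ c)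
    (g : V → W) : rademacherComplexity (fun v ↦ f (g v)) ≤ rademacherComplexity f :=
  rademacherComplexity_le_of_forall_selection fun v ↦
    expect_rademacherAverage_le_rademacherComplexity hf fun σ ↦ g (v σ)

variable [Nonempty W]

theorem rademacherComplexity_const_sub_le (hf : ∀ w i, |f w i| ≤ c) (x : ι → ℝ) :
    rademacherComplexity (fun w i ↦ x i - f w i) ≤ rademacherComplexity f := by
  refine rademacherComplexity_le_of_forall_selection fun w ↦ ?_
  calc 𝔼 σ, rademacherAverage σ (fun i ↦ x i - f (w σ) i)
      = 𝔼 σ, -rademacherAverage σ (f (w σ)) := by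
        simp only [rademacherAverage_sub, expect_sub_distrib, expect_rademacherAverage, zero_sub,
          expect_neg_distrib]
    _ = 𝔼 σ : ι → Bool, rademacherAverage σ (f (w fun i ↦ !σ i)) := by
        rw [← expect_comp_not]
        simp only [rademacherAverage_not, neg_neg]
    _ ≤ rademacherComplexity f := expect_rademacherAverage_le_rademacherComplexity hf _

theorem rademacherComplexity_integral_le {Ω : Type*} [MeasurableSpace Ω] {μ : Measure Ω}
    [IsProbabilityMeasure μ] {q : Ω → W → ι → ℝ}
    (hmeas : ∀ w i, AEStronglyMeasurable (fun ω ↦ q ω w i) μ) (hq : ∀ ω w i, |q ω w i| ≤ c)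
    {C : ℝ} (hC : ∀ ω, rademacherComplexity (q ω) ≤ C) :
    rademacherComplexity (fun w i ↦ ∫ ω, q ω w i ∂μ) ≤ C := by
  have hint (w i) : Integrable (fun ω ↦ q ω w i) μ :=
    .of_bound (hmeas w i) c (.of_forall fun ω ↦ hq ω w i)
  refine rademacherComplexity_le_of_forall_selection fun w ↦ ?_
  have hint_avg (σ : ι → Bool) : Integrable (fun ω ↦ rademacherAverage σ (q ω (w σ))) μ :=
    integrable_rademacherAverage (hint (w σ)) σ
  calc 𝔼 σ, rademacherAverage σ (fun i ↦ ∫ ω, q ω (w σ) i ∂μ)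
      = ∫ ω, 𝔼 σ, rademacherAverage σ (q ω (w σ)) ∂μ := by
        rw [integral_expect hint_avg]
        simp only [integral_rademacherAverage (hint _)]
    _ ≤ ∫ _, C ∂μ := integral_mono (integrable_expect hint_avg) (integrable_const C) fun ω ↦
        (expect_rademacherAverage_le_rademacherComplexity (hq ω) w).trans (hC ω)
    _ = C := by simp

end Rademacher

section Massart

theorem le_sqrt_of_forall_mul_le {x v L : ℝ} (h : ∀ t, t * x ≤ L + v * t ^ 2) :
    x ≤ √(4 * v * L) := by
  have hdisc : discrim v (-x) L ≤ 0 := discrim_le_zero fun t ↦ by linarith [h t]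
  rw [discrim] at hdisc
  exact le_sqrt_of_sq_le (by linarith)

variable {ι W : Type*} [Fintype ι] [DecidableEq ι] [Nonempty ι] [Nonempty W]
  {f : W → ι → ℝ} {V : Finset (ι → ℝ)}

theorem rademacherComplexity_le_of_abs_le (hV : ∀ w, f w ∈ V) {c : ℝ}
    (hf : ∀ w i, |f w i| ≤ c) :
    rademacherComplexity f ≤ √(2 * c ^ 2 * log #V / Fintype.card ι) := by
  classical
  refine rademacherComplexity_le_of_forall_selection fun w ↦ ?_
  set R := 𝔼 σ, rademacherAverage σ (f (w σ))
  set U := univ.image fun σ : ι → Bool ↦ f (w σ)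
  have hUV : U ⊆ V := image_subset_iff.2 fun σ _ ↦ hV (w σ)
  have hcard : (0 : ℝ) < #U := by exact_mod_cast card_pos.2 (univ_nonempty.image _)
  have hexp (t : ℝ) : exp (t * R) ≤ #U * exp (c ^ 2 / (2 * Fintype.card ι) * t ^ 2) :=
    calc exp (t * R) ≤ 𝔼 σ, exp (t * rademacherAverage σ (f (w σ))) := by
          rw [mul_expect]
          exact exp_expect_le_expect_exp _
      _ ≤ 𝔼 σ, ∑ x ∈ U, exp (t * rademacherAverage σ x) :=
          expect_le_expect fun σ _ ↦ single_le_sum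
            (f := fun x ↦ exp (t * rademacherAverage σ x)) (fun _ _ ↦ (exp_pos _).le)
            (mem_image_of_mem _ (mem_univ σ))
      _ = ∑ x ∈ U, 𝔼 σ, exp (t * rademacherAverage σ x) := expect_sum_comm _ _ _
      _ ≤ #U * exp (c ^ 2 / (2 * Fintype.card ι) * t ^ 2) := by
          rw [← nsmul_eq_mul]
          refine sum_le_card_nsmul _ _ _ fun x hx ↦ expect_exp_rademacherAverage_le ?_ t
          obtain ⟨σ, -, rfl⟩ := mem_image.1 hx
          exact hf (w σ)
  calc R ≤ √(4 * (c ^ 2 / (2 * Fintype.card ι)) * log #U) := by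
        refine le_sqrt_of_forall_mul_le fun t ↦ ?_
        rw [← exp_le_exp, exp_add, exp_log hcard]
        exact hexp t
    _ ≤ √(4 * (c ^ 2 / (2 * Fintype.card ι)) * log #V) := by gcongr
    _ = √(2 * c ^ 2 * log #V / Fintype.card ι) := by
        congr 1
        ring

/-- **Massart's finite class lemma**. -/
theorem rademacherComplexity_le_of_mem_Icc (hV : ∀ w, f w ∈ V) {a b : ℝ}
    (hf : ∀ w i, f w i ∈ Set.Icc a b) :
    rademacherComplexity f ≤ √((b - a) ^ 2 * log #V / (2 * Fintype.card ι)) := by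
  classical
  have hcentered (w i) : |(a + b) / 2 - f w i| ≤ (b - a) / 2 := by
    rw [abs_le]
    constructor <;> linarith [(hf w i).1, (hf w i).2]
  let V' : Finset (ι → ℝ) := V.image fun x i ↦ (a + b) / 2 - x i
  have hV' (w) : (fun i ↦ (a + b) / 2 - f w i) ∈ V' := mem_image_of_mem _ (hV w)
  have hcard : (0 : ℝ) < #V' := by exact_mod_cast card_pos.2 ⟨_, hV' (Classical.arbitrary W)⟩
  calc rademacherComplexity f
      = rademacherComplexity fun w i ↦ (a + b) / 2 - ((a + b) / 2 - f w i) := by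
        simp only [sub_sub_cancel]
    _ ≤ rademacherComplexity fun w i ↦ (a + b) / 2 - f w i :=
        rademacherComplexity_const_sub_le hcentered _
    _ ≤ √(2 * ((b - a) / 2) ^ 2 * log #V' / Fintype.card ι) :=
        rademacherComplexity_le_of_abs_le hV' hcentered
    _ ≤ √(2 * ((b - a) / 2) ^ 2 * log #V / Fintype.card ι) := by
        have hcard_le : #V' ≤ #V := card_image_le
        gcongr
    _ = √((b - a) ^ 2 * log #V / (2 * Fintype.card ι)) := by
        congr 1
        ring

end Massart

section VCDimension

variable {K P : Type*} [Field K] [LinearOrder K] [IsStrictOrderedRing K] [DecidableEq P]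
  {D : P → Set K} {𝒜 : Finset (Finset P)}

theorem vcDim_le_finrank_of_isLowerSet {V : Type*} [AddCommGroup V] [Module K V]
    [FiniteDimensional K V] (ℓ : P → Dual K V) (hD : ∀ p, IsLowerSet (D p))
    (h𝒜 : ∀ A ∈ 𝒜, ∃ v, ∀ p, p ∈ A ↔ ℓ p v ∈ D p) : 𝒜.vcDim ≤ finrank K V := by
  refine Finset.sup_le fun S hS ↦ ?_
  rw [mem_shatterer] at hS
  by_contra! hcard
  -- The vector picking out the `p` with `0 < f p` and the one picking out those with `f p < 0`
  -- take strictly ordered values under the zero form `∑ p ∈ S, f p • ℓ p`.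
  obtain ⟨f, hf, p₀, hp₀, hfp₀⟩ : ∃ f : P → K, ∑ p ∈ S, f p • ℓ p = 0 ∧ ∃ p ∈ S, f p ≠ 0 := by
    have hdep : ¬ LinearIndepOn K ℓ (S : Set P) := fun h ↦ by
      simpa [hcard.not_ge] using h.linearIndependent.fintype_card_le_finrank
    simpa [linearIndepOn_finset_iff] using hdep
  have hzero (v : V) : ∑ p ∈ S, f p * ℓ p v = 0 := by
    simpa using LinearMap.congr_fun hf v
  have hpick (T) (hT : T ⊆ S) : ∃ v, ∀ p ∈ S, ℓ p v ∈ D p ↔ p ∈ T := by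
    obtain ⟨A, hA, rfl⟩ := hS hT
    obtain ⟨v, hv⟩ := h𝒜 A hA
    exact ⟨v, fun p hp ↦ by simp [← hv, hp]⟩
  obtain ⟨u, hu⟩ := hpick {p ∈ S | 0 < f p} (filter_subset _ _)
  obtain ⟨v, hv⟩ := hpick {p ∈ S | f p < 0} (filter_subset _ _)
  have hlt (p) (hp : p ∈ S) (hfp : f p ≠ 0) : f p * ℓ p u < f p * ℓ p v := by
    have hu := hu p hp
    have hv := hv p hp
    simp only [mem_filter, hp, true_and] at hu hv
    rcases hfp.lt_or_gt with h | h
    · refine mul_lt_mul_of_neg_left (lt_of_not_ge fun hle ↦ ?_) h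
      exact h.not_gt (hu.1 (hD p hle (hv.2 h)))
    · refine mul_lt_mul_of_pos_left (lt_of_not_ge fun hle ↦ ?_) h
      exact h.not_gt (hv.1 (hD p hle (hu.2 h)))
  have hsum : ∑ p ∈ S, f p * ℓ p u < ∑ p ∈ S, f p * ℓ p v := by
    refine sum_lt_sum (fun p hp ↦ ?_) ⟨p₀, hp₀, hlt p₀ hp₀ hfp₀⟩
    rcases eq_or_ne (f p) 0 with hfp | hfp
    · simp [hfp]
    · exact (hlt p hp hfp).le
  simp [hzero] at hsum

theorem sum_choose_le_add_one_pow (n k : ℕ) : ∑ i ∈ Iic k, n.choose i ≤ (n + 1) ^ k := by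
  rw [add_pow, Nat.range_succ_eq_Iic]
  refine sum_le_sum fun i hi ↦ ?_
  rw [one_pow, mul_one]
  exact (Nat.choose_le_pow n i).trans
    (Nat.le_mul_of_pos_right _ (Nat.choose_pos (mem_Iic.1 hi)))

theorem card_le_add_one_pow_of_vcDim_le [Fintype P] {k : ℕ} (h : 𝒜.vcDim ≤ k) :
    #𝒜 ≤ (Fintype.card P + 1) ^ k :=
  calc #𝒜 ≤ ∑ i ∈ Iic 𝒜.vcDim, (Fintype.card P).choose i :=
        (card_le_card_shatterer 𝒜).trans card_shatterer_le_sum_vcDim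
    _ ≤ (Fintype.card P + 1) ^ 𝒜.vcDim := sum_choose_le_add_one_pow _ _
    _ ≤ (Fintype.card P + 1) ^ k := Nat.pow_le_pow_right (Nat.succ_pos _) h

theorem vcDim_le_card_of_support_subset {κ : Type*} (ℓ : P → Dual K (κ → K))
    (hD : ∀ p, IsLowerSet (D p)) (T : Finset κ)
    (h𝒜 : ∀ A ∈ 𝒜, ∃ w : κ → K, w.support ⊆ T ∧ ∀ p, p ∈ A ↔ ℓ p w ∈ D p) :
    𝒜.vcDim ≤ #T := by
  let extend : (T → K) →ₗ[K] κ → K := Function.ExtendByZero.linearMap K Subtype.val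
  have hextend (w : κ → K) (hw : w.support ⊆ T) : extend (fun j ↦ w j) = w := by
    ext j
    by_cases hj : j ∈ T
    · exact Subtype.val_injective.extend_apply (fun j : T ↦ w j) 0 ⟨j, hj⟩
    · have hwj : w j = 0 := Function.notMem_support.1 fun h ↦ hj (hw h)
      simp [extend, hj, hwj]
  have hdim := vcDim_le_finrank_of_isLowerSet (fun p ↦ ℓ p ∘ₗ extend) hD fun A hA ↦ by
    obtain ⟨w, hwT, hAw⟩ := h𝒜 A hA
    exact ⟨fun j ↦ w j, fun p ↦ by rw [LinearMap.comp_apply, hextend w hwT, hAw]⟩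
  simpa using hdim

end VCDimension

theorem card_le_pow_of_hammingNorm_le {K P κ : Type*} [Field K] [LinearOrder K]
    [IsStrictOrderedRing K] [Fintype P] [Fintype κ] [Nonempty κ] (ℓ : P → Dual K (κ → K))
    {D : P → Set K} (hD : ∀ p, IsLowerSet (D p)) {𝒜 : Finset (Finset P)} {s : ℕ}
    (h𝒜 : ∀ A ∈ 𝒜, ∃ w : κ → K, hammingNorm w ≤ s ∧ ∀ p, p ∈ A ↔ ℓ p w ∈ D p) :
    #𝒜 ≤ (Fintype.card κ * (Fintype.card P + 1)) ^ s := by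
  classical
  set k := min s (Fintype.card κ)
  let supportedOn (T : Finset κ) : Finset (Finset P) :=
    {A ∈ 𝒜 | ∃ w : κ → K, w.support ⊆ T ∧ ∀ p, p ∈ A ↔ ℓ p w ∈ D p}
  have hcover : 𝒜 ⊆ (powersetCard k univ).biUnion supportedOn := by
    intro A hA
    obtain ⟨w, hw, hAw⟩ := h𝒜 A hA
    obtain ⟨T, hwT, hT⟩ := exists_superset_card_eq (s := ({j | w j ≠ 0} : Finset κ)) (n := k)
      (le_min hw (card_le_univ _)) (min_le_right _ _)
    exact mem_biUnion.2 ⟨T, mem_powersetCard.2 ⟨subset_univ T, hT⟩,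
      mem_filter.2 ⟨hA, w, fun j hj ↦ hwT (by simpa using hj), hAw⟩⟩
  have hpiece (T) (hT : T ∈ powersetCard k (univ : Finset κ)) :
      #(supportedOn T) ≤ (Fintype.card P + 1) ^ s := by
    refine card_le_add_one_pow_of_vcDim_le ?_
    calc (supportedOn T).vcDim ≤ #T :=
          vcDim_le_card_of_support_subset ℓ hD T fun A hA ↦ (mem_filter.1 hA).2
      _ ≤ s := (mem_powersetCard.1 hT).2.trans_le (min_le_left _ _)
  have hsupports : #(powersetCard k (univ : Finset κ)) ≤ Fintype.card κ ^ s := by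
    rw [card_powersetCard, card_univ]
    exact (Nat.choose_le_pow _ _).trans (Nat.pow_le_pow_right Fintype.card_pos (min_le_left _ _))
  calc #𝒜 ≤ #(powersetCard k (univ : Finset κ)) * (Fintype.card P + 1) ^ s :=
        (card_le_card hcover).trans (card_biUnion_le_card_mul _ _ _ hpiece)
    _ ≤ Fintype.card κ ^ s * (Fintype.card P + 1) ^ s := by gcongr
    _ = (Fintype.card κ * (Fintype.card P + 1)) ^ s := (mul_pow _ _ _).symm

theorem indicator_one_mem_Icc {α : Type*} (S : Set α) (x : α) :
    S.indicator (1 : α → ℝ) x ∈ Set.Icc 0 1 :=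
  ⟨Set.indicator_nonneg (fun _ _ ↦ zero_le_one) x, Set.indicator_le_self' (fun _ _ ↦ zero_le_one) x⟩

section Sparse

/-- The real vectors with at most `s` nonzero coordinates, the weight class `𝒲` of the paper. -/
abbrev SparseVector (κ : Type*) [Fintype κ] (s : ℕ) : Type _ := {w : κ → ℝ // hammingNorm w ≤ s}

instance (κ : Type*) [Fintype κ] (s : ℕ) : Nonempty (SparseVector κ s) := ⟨⟨0, by simp⟩⟩

variable {ι P κ : Type*} [Fintype ι] [DecidableEq ι] [Nonempty ι] [Fintype P] [Fintype κ]
  [Nonempty κ] (ℓ : P → Dual ℝ (κ → ℝ)) (Q : ι → Finset P) (s : ℕ)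

theorem rademacherComplexity_indicator_pi_le {D : P → Set ℝ} (hD : ∀ p, IsLowerSet (D p)) :
    rademacherComplexity (fun (w : SparseVector κ s) i ↦
        ((Q i : Set P).pi D).indicator (1 : (P → ℝ) → ℝ) fun p ↦ ℓ p w) ≤
      √(s * log (Fintype.card κ * (Fintype.card P + 1)) / (2 * Fintype.card ι)) := by
  classical
  let cut (w : SparseVector κ s) : Finset P := {p | ℓ p w ∈ D p}
  let 𝒜 : Finset (Finset P) := {A | ∃ w, cut w = A}
  have hcard : #𝒜 ≤ (Fintype.card κ * (Fintype.card P + 1)) ^ s := by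
    refine card_le_pow_of_hammingNorm_le ℓ hD fun A hA ↦ ?_
    obtain ⟨w, rfl⟩ := (mem_filter.1 hA).2
    exact ⟨w, w.2, fun p ↦ by simp [cut]⟩
  let V := 𝒜.image fun A i ↦ if Q i ⊆ A then (1 : ℝ) else 0
  have hV (w : SparseVector κ s) :
      (fun i ↦ ((Q i : Set P).pi D).indicator (1 : (P → ℝ) → ℝ) fun p ↦ ℓ p w) ∈ V := by
    refine mem_image.2 ⟨cut w, mem_filter.2 ⟨mem_univ _, w, rfl⟩, funext fun i ↦ ?_⟩
    simp [cut, subset_iff, Set.indicator_apply, Set.mem_pi]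
  have hVpos : (0 : ℝ) < #V := by exact_mod_cast card_pos.2 ⟨_, hV (Classical.arbitrary _)⟩
  have hVcard : (#V : ℝ) ≤ (Fintype.card κ * (Fintype.card P + 1)) ^ s := by
    exact_mod_cast card_image_le.trans hcard
  calc _ ≤ √((1 - 0) ^ 2 * log #V / (2 * Fintype.card ι)) :=
        rademacherComplexity_le_of_mem_Icc hV fun _ _ ↦ indicator_one_mem_Icc _ _
    _ ≤ √(s * log (Fintype.card κ * (Fintype.card P + 1)) / (2 * Fintype.card ι)) := by
        rw [sub_zero, one_pow, one_mul, ← log_pow]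
        gcongr

theorem integral_indicator_pi_Iic (S : Finset P) (t : P → unitInterval) :
    ∫ U : P → unitInterval, ((S : Set P).pi fun p ↦ Set.Iic (t p)).indicator 1 U =
      ∏ p ∈ S, (t p : ℝ) := by
  have hmeas : MeasurableSet ((S : Set P).pi fun p ↦ Set.Iic (t p)) :=
    .pi S.countable_toSet fun p _ ↦ measurableSet_Iic
  rw [integral_indicator_one hmeas, Measure.real, volume_pi, Measure.pi_pi_finset,
    ENNReal.toReal_prod]
  simp [ENNReal.toReal_ofReal (t _).2.1]

theorem rademacherComplexity_prod_antitone_le {g : P → ℝ → unitInterval}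
    (hg : ∀ p, Antitone (g p)) :
    rademacherComplexity (fun (w : SparseVector κ s) i ↦ ∏ p ∈ Q i, (g p (ℓ p w) : ℝ)) ≤
      √(s * log (Fintype.card κ * (Fintype.card P + 1)) / (2 * Fintype.card ι)) := by
  simp_rw [← integral_indicator_pi_Iic]
  refine rademacherComplexity_integral_le (c := 1) (fun w i ↦ ?_) (fun U w i ↦ ?_) fun U ↦ ?_
  · exact (measurable_one.indicator
      (.pi (Q i).countable_toSet fun p _ ↦ measurableSet_Iic)).aestronglyMeasurable
  · have hmem := indicator_one_mem_Icc ((Q i : Set P).pi fun p ↦ Set.Iic (g p (ℓ p w))) U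
    exact (abs_of_nonneg hmem.1).trans_le hmem.2
  · exact rademacherComplexity_indicator_pi_le ℓ Q s (D := fun p ↦ {z | U p ≤ g p z})
      fun p z z' hz hU ↦ le_trans hU (hg p hz)

theorem integral_unitInterval_rpow {a : ℝ} (ha : 0 ≤ a) :
    ∫ u : unitInterval, (u : ℝ) ^ a = (1 + a)⁻¹ := by
  rw [unitInterval.volume_def, integral_subtype_comap measurableSet_Icc (fun u : ℝ ↦ u ^ a),
    integral_Icc_eq_integral_Ioc, ← intervalIntegral.integral_of_le zero_le_one,
    integral_rpow (Or.inl (by linarith)), one_rpow, zero_rpow (by linarith), sub_zero, one_div,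
    add_comm]

theorem rademacherComplexity_inv_one_add_sum_exp_le :
    rademacherComplexity (fun (w : SparseVector κ s) i ↦ (1 + ∑ p ∈ Q i, exp (ℓ p w))⁻¹) ≤
      √(s * log (Fintype.card κ * (Fintype.card P + 1)) / (2 * Fintype.card ι)) := by
  have hnonneg (w : SparseVector κ s) (i) : 0 ≤ ∑ p ∈ Q i, exp (ℓ p w) :=
    sum_nonneg fun _ _ ↦ (exp_pos _).le
  simp_rw [← fun w i ↦ integral_unitInterval_rpow (hnonneg w i)]
  refine rademacherComplexity_integral_le (c := 1) (fun w i ↦ ?_) (fun u w i ↦ ?_) fun u ↦ ?_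
  · exact (measurable_subtype_coe.pow_const _).aestronglyMeasurable
  · rw [abs_of_nonneg (rpow_nonneg u.2.1 _)]
    exact rpow_le_one u.2.1 u.2.2 (hnonneg w i)
  · let g (z : ℝ) : unitInterval :=
      ⟨(u : ℝ) ^ exp z, rpow_nonneg u.2.1 _, rpow_le_one u.2.1 u.2.2 (exp_pos z).le⟩
    have hg : Antitone g := fun z z' hz ↦ Subtype.coe_le_coe.1
      (rpow_le_rpow_of_exponent_ge_of_imp u.2.1 u.2.2 (exp_le_exp.2 hz)
        fun _ h ↦ absurd h (exp_pos z').ne')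
    have hprod (w : SparseVector κ s) (i) :
        (u : ℝ) ^ ∑ p ∈ Q i, exp (ℓ p w) = ∏ p ∈ Q i, (g (ℓ p w) : ℝ) :=
      rpow_sum_of_nonneg u.2.1 fun _ _ ↦ (exp_pos _).le
    simp only [hprod]
    exact rademacherComplexity_prod_antitone_le ℓ Q s fun _ ↦ hg

end Sparse

theorem softmaxProb_eq_inv_one_add_sum_exp {Y : Type*} [DecidableEq Y] (z : Y → ℝ) (b : ℝ)
    {A : Finset Y} {y : Y} (hy : y ∈ A) :
    softmaxProb z b A y = (1 + ∑ y' ∈ A.erase y, exp ((z y' - z y) / b))⁻¹ := by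
  rw [softmaxProb, ← inv_div, ← add_sum_erase A _ hy, add_div, div_self (exp_pos _).ne', sum_div]
  simp only [sub_div, exp_sub]

theorem rademacherComplexity_inv_one_add_sum_exp_sub_le {ι κ : Type*} [Fintype ι] [DecidableEq ι]
    [Nonempty ι] [Fintype κ] [Nonempty κ] {Y : ι → Type*} [∀ i, DecidableEq (Y i)]
    (A : ∀ i, Finset (Y i)) {y : ∀ i, Y i} (hy : ∀ i, y i ∈ A i) (φ : ∀ i, Y i → κ → ℝ) (s : ℕ) :
    rademacherComplexity (fun (w : SparseVector κ s) i ↦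
        (1 + ∑ y' ∈ (A i).erase (y i), exp ((φ i y' - φ i (y i)) ⬝ᵥ w))⁻¹) ≤
      √(s * log (Fintype.card κ * (∑ i, #(A i) : ℕ)) / (2 * Fintype.card ι)) := by
  let P := Σ i, ↥((A i).erase (y i))
  have hcard : (Fintype.card P + 1 : ℝ) ≤ (∑ i, #(A i) : ℕ) := by
    norm_cast
    rw [Fintype.card_sigma, Nat.add_one_le_iff]
    refine sum_lt_sum_of_nonempty univ_nonempty fun i _ ↦ ?_
    rw [Fintype.card_coe]
    exact card_erase_lt_of_mem (hy i)
  let diff (p : P) : Dual ℝ (κ → ℝ) := dotProductBilin ℝ ℝ (φ p.1 p.2 - φ p.1 (y p.1))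
  let competitors (i : ι) : Finset P := univ.map (Function.Embedding.sigmaMk i)
  have hsum (i) (w : κ → ℝ) : ∑ y' ∈ (A i).erase (y i), exp ((φ i y' - φ i (y i)) ⬝ᵥ w) =
      ∑ p ∈ competitors i, exp (diff p w) := by
    rw [sum_map, ← sum_coe_sort]
    rfl
  simp_rw [hsum]
  grw [← hcard]
  exact rademacherComplexity_inv_one_add_sum_exp_le diff competitors s

theorem mul_log_div_le {d N M : ℕ} (hd : 0 < d) (hN : 0 < N) (hNM : N ≤ M) (s m : ℕ) :
    (s : ℝ) * log (d * N) / (2 * m) ≤ s * (log d + 2 * log M) / m := by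
  have hlogd : 0 ≤ log d := log_natCast_nonneg d
  have hlogM : 0 ≤ log M := log_natCast_nonneg M
  have hlogN : log N ≤ log M := by gcongr
  rw [log_mul (by positivity) (by positivity), mul_comm (2 : ℝ), ← div_div, div_right_comm,
    mul_div_assoc]
  gcongr
  linarith

theorem empirical_rademacher_complexity_bound_general {ι κ : Type*} [Fintype ι] [DecidableEq ι]
    [Nonempty ι] [Fintype κ] [Nonempty κ] {Y : ι → Type*} (A : ∀ i, Finset (Y i)) {y : ∀ i, Y i}
    (hy : ∀ i, y i ∈ A i) (φ : ∀ i, Y i → κ → ℝ) {β : (κ → ℝ) → ℝ} (hβ : ∀ w, β w ≠ 0) (s : ℕ) :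
    rademacherComplexity (fun (w : SparseVector κ s) i ↦
        1 - softmaxProb (fun y' ↦ φ i y' ⬝ᵥ w) (β w) (A i) (y i)) ≤
      √(s * log (Fintype.card κ * (∑ i, #(A i) : ℕ)) / (2 * Fintype.card ι)) := by
  classical
  let prob (w : SparseVector κ s) (i : ι) : ℝ :=
    (1 + ∑ y' ∈ (A i).erase (y i), exp ((φ i y' - φ i (y i)) ⬝ᵥ w))⁻¹
  have hprob (w i) : |prob w i| ≤ 1 := by
    have hnonneg : 0 ≤ ∑ y' ∈ (A i).erase (y i), exp ((φ i y' - φ i (y i)) ⬝ᵥ (w : κ → ℝ)) :=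
      sum_nonneg fun _ _ ↦ (exp_pos _).le
    rw [abs_of_nonneg (by positivity)]
    exact inv_le_one_of_one_le₀ (by linarith)
  let rescale (w : SparseVector κ s) : SparseVector κ s :=
    ⟨(β w)⁻¹ • w, by
      rw [hammingNorm_smul fun _ ↦ IsSMulRegular.of_ne_zero (inv_ne_zero (hβ w))]; exact w.2⟩
  have hsoftmax (w : SparseVector κ s) (i) :
      softmaxProb (fun y' ↦ φ i y' ⬝ᵥ w) (β w) (A i) (y i) = prob (rescale w) i := by
    simp only [softmaxProb_eq_inv_one_add_sum_exp _ _ (hy i), prob, rescale, sub_dotProduct,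
      dotProduct_smul, smul_eq_mul, ← mul_sub, div_eq_inv_mul]
  simp only [hsoftmax]
  calc _ ≤ rademacherComplexity fun w i ↦ prob (rescale w) i :=
        rademacherComplexity_const_sub_le (fun w ↦ hprob (rescale w)) _
    _ ≤ rademacherComplexity prob := rademacherComplexity_comp_le hprob rescale
    _ ≤ _ := rademacherComplexity_inv_one_add_sum_exp_sub_le A hy φ s

/-- **Empirical Rademacher complexity bound in the proof of Theorem 1.**
The empirical Rademacher complexity of the CRF loss class over `s`-sparse
weight vectors, written as an average over all `2^m` sign vectors of the supremum
of the signed empirical loss, is at most `√(s(ln d + 2 ln(mr))/m)`. -/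
theorem empirical_rademacher_complexity_bound
    (m d s r : ℕ) (hm : 0 < m) (hd : 0 < d) (hr : 0 < r)
    (Y : Fin m → Type*) [∀ i, Fintype (Y i)] [∀ i, Nonempty (Y i)]
    (hcard : ∀ i, Fintype.card (Y i) ≤ r)
    (yobs : ∀ i, Y i)
    (φ : ∀ i, Y i → Fin d → ℝ)
    (β : (Fin d → ℝ) → ℝ) (hβ : ∀ w, 0 < β w) :
    ((1 : ℝ) / 2 ^ m) * ∑ σ : Fin m → Bool,
        sSup {v : ℝ | ∃ w : Fin d → ℝ,
          (Finset.univ.filter fun j => w j ≠ 0).card ≤ s ∧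
          v = (1 / (m : ℝ)) * ∑ i, (if σ i then (1 : ℝ) else -1) *
            (1 - softmaxProb (linScore (φ i) w) (β w) Finset.univ (yobs i))}
      ≤ Real.sqrt ((s : ℝ) * (Real.log d + 2 * Real.log (m * r)) / m) := by
  have : NeZero d := ⟨hd.ne'⟩
  have : NeZero m := ⟨hm.ne'⟩
  have hgeneral := empirical_rademacher_complexity_bound_general (fun i ↦ (univ : Finset (Y i)))
    (fun i ↦ mem_univ (yobs i)) φ (fun w ↦ (hβ w).ne') s
  rw [rademacherComplexity_subtype (fun w : Fin d → ℝ ↦ hammingNorm w ≤ s) fun w i ↦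
    1 - softmaxProb (fun y ↦ φ i y ⬝ᵥ w) (β w) univ (yobs i)] at hgeneral
  simp only [Fintype.card_fin] at hgeneral
  have hsum : ∑ i, #(univ : Finset (Y i)) ≤ m * r :=
    (sum_le_card_nsmul univ _ r fun i _ ↦ hcard i).trans_eq (by simp)
  have hpos : 0 < ∑ i, #(univ : Finset (Y i)) :=
    sum_pos (fun i _ ↦ card_pos.2 univ_nonempty) univ_nonempty
  have hlog := mul_log_div_le hd hpos hsum s m
  rw [Nat.cast_mul] at hlog
  exact hgeneral.trans (sqrt_le_sqrt hlog)
end
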